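/- arXiv:2107.12767 — 2 statements merged into one kernel-verified Lean document; each statement's English description precedes it below -/
import Mathlib

section
/- Let p > 2 and assume p − 1 < λ < ∞ if N ≤ p, and p − 1 < λ < (N(p−1)+p)/(N−p) if N > p. If u ∈ C^1(ℝ^N) is a weak solution of −Δ_p u = |u|^{λ−1} u on all of ℝ^N which is stable outside a compact set K ⊂ ℝ^N, then u ≡ 0. -/
open MeasureTheory
open scoped RealInnerProductSpace

/-!
Write `l = lam + 1`, `q⁻¹ = p⁻¹ - l⁻¹` and `W = ‖∇ u‖ ^ p + |u| ^ l`. Subcriticality of `lam` says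
exactly that the dimension `N` is smaller than `q`.

Stability tested with `u ξ ^ (q / 2)` and the equation tested with `u ξ ^ q` give, after Young's
inequality, `∫ W ξ ^ q ≤ C ∫ ‖∇ ξ‖ ^ q` for cutoffs `ξ` supported off `K`. For a cutoff at scale `R`
the right-hand side is of order `R ^ (N - q)`, so `W` is integrable. Hence the boundary terms
vanish as `R → ∞` in the equation tested with `u`, which yields `∫ ‖∇ u‖ ^ p = ∫ |u| ^ l`, and in
Pohozaev's identity, which then reads `(1 - N / q) ∫ |u| ^ l = 0`.

Since `u` is only `C¹`, Pohozaev's identity is not obtained by testing with `⟪∇ u, x⟫`. Instead,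
`u` minimizes a convex functional whose linear term has frozen coefficients, localized by a weight,
and the identity is the vanishing of its derivative along the dilations `x ↦ u (s • x)`.
-/

section

open Filter Topology Set Metric
open scoped Gradient

section Gradient

variable {E : Type*} [NormedAddCommGroup E] [InnerProductSpace ℝ E] [CompleteSpace E]
  {f g : E → ℝ} {x : E}

theorem continuous_gradient (hf : ContDiff ℝ 1 f) : Continuous (∇ f) :=
  (LinearIsometryEquiv.continuous _).comp (hf.continuous_fderiv one_ne_zero)

theorem gradient_mul (hf : DifferentiableAt ℝ f x) (hg : DifferentiableAt ℝ g x) :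
    ∇ (fun y => f y * g y) x = f x • ∇ g x + g x • ∇ f x :=
  HasGradientAt.gradient <| hasGradientAt_iff_hasFDerivAt.2 <| by
    simpa using hf.hasGradientAt.hasFDerivAt.fun_mul hg.hasGradientAt.hasFDerivAt

theorem gradient_sub (hf : DifferentiableAt ℝ f x) (hg : DifferentiableAt ℝ g x) :
    ∇ (fun y => f y - g y) x = ∇ f x - ∇ g x :=
  HasGradientAt.gradient <| hasGradientAt_iff_hasFDerivAt.2 <| by
    simpa using hf.hasGradientAt.hasFDerivAt.fun_sub hg.hasGradientAt.hasFDerivAt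

theorem gradient_scalar_comp {h : ℝ → ℝ} {h' : ℝ} (hh : HasDerivAt h h' (f x))
    (hf : DifferentiableAt ℝ f x) : ∇ (fun y => h (f y)) x = h' • ∇ f x :=
  HasGradientAt.gradient <| hasGradientAt_iff_hasFDerivAt.2 <| by
    simpa [Function.comp_def] using hh.comp_hasFDerivAt x hf.hasGradientAt.hasFDerivAt

theorem gradient_rpow_const {q : ℝ} (hf : DifferentiableAt ℝ f x) (hq : 1 ≤ q) :
    ∇ (fun y => f y ^ q) x = (q * f x ^ (q - 1)) • ∇ f x :=
  gradient_scalar_comp (Real.hasDerivAt_rpow_const (Or.inr hq)) hf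

theorem gradient_comp_smul (f : E → ℝ) (s : ℝ) (x : E) :
    ∇ (fun y => f (s • y)) x = s • ∇ f (s • x) := by
  simp only [gradient, ← map_smul, ← fderiv_comp_smul]

theorem gradient_eq_zero_of_notMem_tsupport (hx : x ∉ tsupport f) : ∇ f x = 0 := by
  rw [gradient, image_eq_zero_of_notMem_tsupport fun h => hx (tsupport_fderiv_subset ℝ h), map_zero]

theorem hasCompactSupport_gradient (hf : HasCompactSupport f) : HasCompactSupport (∇ f) :=
  HasCompactSupport.intro hf fun _ hx => gradient_eq_zero_of_notMem_tsupport hx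

end Gradient

section Flux

variable {E : Type*} [NormedAddCommGroup E] [InnerProductSpace ℝ E] {p : ℝ}

/-- The flux `‖v‖ ^ (p - 2) v` whose divergence along `v = ∇ u` is the `p`-Laplacian of `u`. -/
noncomputable def pFlux (p : ℝ) (v : E) : E := ‖v‖ ^ (p - 2) • v

theorem inner_pFlux_left (p : ℝ) (v w : E) : ⟪pFlux p v, w⟫ = ‖v‖ ^ (p - 2) * ⟪v, w⟫ :=
  real_inner_smul_left _ _ _

theorem norm_pFlux (hp : 1 < p) (v : E) : ‖pFlux p v‖ = ‖v‖ ^ (p - 1) := by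
  rw [pFlux, norm_smul, Real.norm_of_nonneg (by positivity),
    ← Real.rpow_add_one' (norm_nonneg v) (by linarith)]
  ring_nf

theorem inner_pFlux_self (hp : 1 < p) (v : E) : ⟪pFlux p v, v⟫ = ‖v‖ ^ p := by
  rw [inner_pFlux_left, real_inner_self_eq_norm_sq, ← Real.rpow_add_natCast' (norm_nonneg v)] <;>
    norm_num
  linarith

theorem continuous_pFlux (hp : 1 < p) : Continuous (pFlux p : E → E) := by
  refine continuous_iff_continuousAt.2 fun v => ?_
  rcases eq_or_ne v 0 with rfl | hv
  · have hlim : Tendsto (fun w : E => ‖w‖ ^ (p - 1)) (𝓝 0) (𝓝 0) := by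
      have hcont : Continuous fun w : E => ‖w‖ ^ (p - 1) :=
        continuous_norm.rpow_const fun _ => Or.inr (by linarith)
      simpa [Real.zero_rpow (sub_pos.2 hp).ne'] using hcont.tendsto 0
    simpa [ContinuousAt, pFlux] using squeeze_zero_norm (fun w => (norm_pFlux hp w).le) hlim
  · exact (continuousAt_id.norm.rpow_const (Or.inl (norm_ne_zero_iff.2 hv))).smul continuousAt_id

theorem abs_inner_pFlux_le (hp : 1 < p) (v w : E) : |⟪pFlux p v, w⟫| ≤ ‖v‖ ^ (p - 1) * ‖w‖ :=
  norm_pFlux hp v ▸ abs_real_inner_le_norm _ _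

/-- The tangent-plane inequality for the convex function `v ↦ ‖v‖ ^ p / p`, whose gradient is
the flux. -/
theorem inner_pFlux_sub_le (hp : 1 < p) (a b : E) :
    ⟪pFlux p a, b - a⟫ ≤ (‖b‖ ^ p - ‖a‖ ^ p) / p := by
  have hconj : p.HolderConjugate (p / (p - 1)) := .conjExponent hp
  have hyoung := Real.young_inequality_of_nonneg (norm_nonneg b)
    (Real.rpow_nonneg (norm_nonneg a) (p - 1)) hconj
  rw [← Real.rpow_mul (norm_nonneg a), mul_div_cancel₀ _ (sub_pos.2 hp).ne'] at hyoung
  have hab : ⟪pFlux p a, b⟫ ≤ ‖b‖ * ‖a‖ ^ (p - 1) :=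
    (le_abs_self _).trans ((abs_inner_pFlux_le hp a b).trans_eq (mul_comm _ _))
  have hsplit : ‖a‖ ^ p / (p / (p - 1)) = ‖a‖ ^ p - ‖a‖ ^ p / p := by
    field_simp
  rw [inner_sub_right, inner_pFlux_self hp, sub_div]
  linarith

end Flux

section Young

theorem exists_mul_rpow_mul_rpow_mul_rpow_le {α β γ K ε : ℝ} (hα : 0 ≤ α) (hβ : 0 ≤ β)
    (hγ : 0 < γ) (hsum : α + β + γ = 1) (hK : 0 ≤ K) (hε : 0 < ε) :
    ∃ C, ∀ a b c : ℝ, 0 ≤ a → 0 ≤ b → 0 ≤ c →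
      K * (a ^ α * b ^ β * c ^ γ) ≤ ε * a + ε * b + C * c := by
  -- Weighted AM-GM for `ε a`, `ε b`, `C c`, where `ε ^ (α + β) * C ^ γ = K`.
  set C : ℝ := (K / (ε ^ α * ε ^ β)) ^ γ⁻¹ with hCdef
  have hC : 0 ≤ C := by positivity
  have hCK : ε ^ α * ε ^ β * C ^ γ = K := by
    rw [hCdef, Real.rpow_inv_rpow (by positivity) hγ.ne']
    field_simp
  refine ⟨C, fun a b c ha hb hc => ?_⟩
  calc K * (a ^ α * b ^ β * c ^ γ) = (ε * a) ^ α * (ε * b) ^ β * (C * c) ^ γ := by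
        rw [Real.mul_rpow hε.le ha, Real.mul_rpow hε.le hb, Real.mul_rpow hC hc, ← hCK]
        ring
    _ ≤ α * (ε * a) + β * (ε * b) + γ * (C * c) :=
        Real.geom_mean_le_arith_mean3_weighted hα hβ hγ.le (by positivity) (by positivity)
          (by positivity) hsum
    _ ≤ ε * a + ε * b + C * c := by
        refine add_le_add_three ?_ ?_ ?_ <;>
          exact mul_le_of_le_one_left (by positivity) (by linarith)

theorem exists_rpow_mul_cutoff_le {l p q j K ε : ℝ} (hlpq : l.HolderTriple q p) (hj : 0 < j)
    (hjp : j ≤ p) (hK : 0 ≤ K) (hε : 0 < ε) :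
    ∃ C, ∀ a b c ξ : ℝ, 0 ≤ a → 0 ≤ b → 0 ≤ c → 0 ≤ ξ →
      K * (a ^ (p - j) * b ^ j * c ^ j * ξ ^ (q - j)) ≤
        ε * ((a ^ p + b ^ l) * ξ ^ q) + C * c ^ q := by
  have hl := hlpq.left_pos
  have hq := hlpq.right_pos
  have hp := hlpq.pos'
  have hα : 0 ≤ (p - j) / p := div_nonneg (by linarith) hp.le
  have hsum : (p - j) / p + j / l + j / q = 1 := by
    have := hlpq.inv_add_inv_eq_inv
    linear_combination (norm := (field_simp; ring)) j * this
  obtain ⟨C, hyoung⟩ := exists_mul_rpow_mul_rpow_mul_rpow_le hα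
    (by positivity : 0 ≤ j / l) (by positivity : 0 < j / q) hsum hK hε
  refine ⟨C, fun a b c ξ ha hb hc hξ => ?_⟩
  have hξ_exp : q * ((p - j) / p) + q * (j / l) = q - j := by
    linear_combination (norm := (field_simp; ring)) q * hsum
  calc K * (a ^ (p - j) * b ^ j * c ^ j * ξ ^ (q - j))
      = K * ((a ^ p * ξ ^ q) ^ ((p - j) / p) * (b ^ l * ξ ^ q) ^ (j / l) *
          (c ^ q) ^ (j / q)) := by
        rw [Real.mul_rpow (by positivity) (by positivity),
          Real.mul_rpow (by positivity) (by positivity), ← Real.rpow_mul ha, ← Real.rpow_mul hb,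
          ← Real.rpow_mul hc, ← Real.rpow_mul hξ, ← Real.rpow_mul hξ, mul_div_cancel₀ _ hp.ne',
          mul_div_cancel₀ _ hl.ne', mul_div_cancel₀ _ hq.ne', ← hξ_exp,
          Real.rpow_add_of_nonneg hξ (by positivity) (by positivity)]
        ring
    _ ≤ ε * (a ^ p * ξ ^ q) + ε * (b ^ l * ξ ^ q) + C * c ^ q :=
        hyoung _ _ _ (by positivity) (by positivity) (by positivity)
    _ = ε * ((a ^ p + b ^ l) * ξ ^ q) + C * c ^ q := by ring

end Young

section Mollification

variable {E F G H : Type*} [NormedAddCommGroup E] [InnerProductSpace ℝ E] [FiniteDimensional ℝ E]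
  [MeasurableSpace E] [BorelSpace E] [NormedAddCommGroup F] [NormedSpace ℝ F]
  [NormedAddCommGroup G] [NormedSpace ℝ G] [NormedAddCommGroup H] [NormedSpace ℝ H]
  {μ : Measure E} [μ.IsAddHaarMeasure] {h : E → F} {g : E → G}

open scoped Convolution
open ContinuousLinearMap (lsmul)

theorem normed_convolution_eq_zero {R : ℝ} {b : ContDiffBump (0 : E)} (hb : b.rOut ≤ 1)
    (hg : Function.support g ⊆ closedBall 0 R) {x : E} (hx : x ∉ closedBall 0 (R + 1)) :
    (b.normed μ ⋆[lsmul ℝ ℝ, μ] g) x = 0 := by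
  refine Function.notMem_support.1 fun hmem => hx ?_
  obtain ⟨y, hy, z, hz, rfl⟩ := support_convolution_subset _ hmem
  rw [b.support_normed_eq, mem_ball_zero_iff] at hy
  have hz' := mem_closedBall_zero_iff.1 (hg hz)
  rw [mem_closedBall_zero_iff]
  exact (norm_add_le y z).trans (by linarith)

variable [CompleteSpace G]

theorem norm_normed_convolution_le {C : ℝ} (b : ContDiffBump (0 : E)) (hg : Continuous g)
    (hC : ∀ x, ‖g x‖ ≤ C) (x : E) : ‖(b.normed μ ⋆[lsmul ℝ ℝ, μ] g) x‖ ≤ C := by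
  simpa using dist_convolution_le (z₀ := 0) ((norm_nonneg _).trans (hC 0))
    b.support_normed_eq.subset b.nonneg_normed b.integral_normed hg.aestronglyMeasurable
    (x₀ := x) fun y _ => by simpa using hC y

theorem tendsto_integral_normed_convolution {ι : Type*} {l : Filter ι} [l.IsCountablyGenerated]
    {b : ι → ContDiffBump (0 : E)} (hb : Tendsto (fun i => (b i).rOut) l (𝓝 0))
    (B : F →L[ℝ] G →L[ℝ] H) (hh : Continuous h) (hg : Continuous g) (hgc : HasCompactSupport g) :
    Tendsto (fun i => ∫ x, B (h x) (((b i).normed μ ⋆[lsmul ℝ ℝ, μ] g) x) ∂μ) l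
      (𝓝 (∫ x, B (h x) (g x) ∂μ)) := by
  obtain ⟨C, hC⟩ := hgc.exists_bound_of_continuous hg
  obtain ⟨R, hR⟩ := hgc.isCompact.isBounded.subset_closedBall (0 : E)
  refine tendsto_integral_filter_of_dominated_convergence
    ((closedBall 0 (R + 1)).indicator fun x => ‖B‖ * ‖h x‖ * C) ?_ ?_ ?_ ?_
  · have hconv : ∀ i, Continuous ((b i).normed μ ⋆[lsmul ℝ ℝ, μ] g) := fun i =>
      hgc.continuous_convolution_right _ (b i).continuous_normed.locallyIntegrable hg
    exact .of_forall fun i => ((B.continuous.comp hh).clm_apply (hconv i)).aestronglyMeasurable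
  · filter_upwards [hb.eventually_le_const one_pos] with i hi
    refine .of_forall fun x => ?_
    by_cases hx : x ∈ closedBall 0 (R + 1)
    · rw [indicator_of_mem hx]
      exact (B.le_opNorm₂ _ _).trans (by gcongr; exact norm_normed_convolution_le (b i) hg hC x)
    · rw [indicator_of_notMem hx, normed_convolution_eq_zero hi (subset_closure.trans hR) hx,
        map_zero, norm_zero]
  · rw [integrable_indicator_iff measurableSet_closedBall]
    exact ((continuous_const.mul hh.norm).mul continuous_const).continuousOn.integrableOn_compact
      (isCompact_closedBall _ _)
  · exact .of_forall fun x => ((B (h x)).continuous.tendsto _).comp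
      (ContDiffBump.convolution_tendsto_right_of_continuous (μ := μ) hb hg x)

end Mollification

section WeakSolution

variable {E : Type*} [NormedAddCommGroup E] [InnerProductSpace ℝ E] [FiniteDimensional ℝ E]
  [MeasurableSpace E] [BorelSpace E] {p : ℝ} {f u φ : E → ℝ}

/-- `u` is a weak solution of `-Δ_p u = f` on the whole space, tested against smooth compactly
supported functions. -/
def IsWeakPLaplaceSolution (p : ℝ) (f u : E → ℝ) : Prop :=
  ∀ φ : E → ℝ, ContDiff ℝ (⊤ : ℕ∞) φ → HasCompactSupport φ →
    ∫ x, ‖∇ u x‖ ^ (p - 2) * ⟪∇ u x, ∇ φ x⟫ = ∫ x, f x * φ x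

open scoped Convolution in
open ContinuousLinearMap (lsmul) in
theorem IsWeakPLaplaceSolution.integral_inner_pFlux (h : IsWeakPLaplaceSolution p f u)
    (hp : 1 < p) (hu : ContDiff ℝ 1 u) (hf : Continuous f) (hφ : ContDiff ℝ 1 φ)
    (hφc : HasCompactSupport φ) :
    ∫ x, ⟪pFlux p (∇ u x), ∇ φ x⟫ = ∫ x, f x * φ x := by
  let b : ℕ → ContDiffBump (0 : E) := fun n =>
    ⟨1 / (n + 1) / 2, 1 / (n + 1), by positivity, half_lt_self (by positivity)⟩
  have hb : Tendsto (fun n => (b n).rOut) atTop (𝓝 0) := tendsto_one_div_add_atTop_nhds_zero_nat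
  let ψ : ℕ → E → ℝ := fun n => (b n).normed volume ⋆[lsmul ℝ ℝ, volume] φ
  have hψ : ∀ n, ContDiff ℝ (⊤ : ℕ∞) (ψ n) := fun n =>
    (b n).hasCompactSupport_normed.contDiff_convolution_left _ (b n).contDiff_normed
      hφ.continuous.locallyIntegrable
  have hψc : ∀ n, HasCompactSupport (ψ n) := fun n =>
    (b n).hasCompactSupport_normed.convolution _ hφc
  have hψ' : ∀ n x, fderiv ℝ (ψ n) x =
      ((b n).normed volume ⋆[lsmul ℝ ℝ, volume] fderiv ℝ φ) x := fun n x =>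
    (hφc.hasFDerivAt_convolution_right (lsmul ℝ ℝ)
      (b n).continuous_normed.locallyIntegrable hφ x).fderiv
  have hlhs := tendsto_integral_normed_convolution (μ := volume) hb (.apply ℝ ℝ)
    ((continuous_pFlux hp).comp (continuous_gradient hu)) (hφ.continuous_fderiv one_ne_zero)
    (hφc.fderiv ℝ)
  have hrhs := tendsto_integral_normed_convolution (μ := volume) hb (.mul ℝ ℝ) hf hφ.continuous hφc
  refine tendsto_nhds_unique ?_ hrhs
  have heq : ∀ n, ∫ x, fderiv ℝ (ψ n) x (pFlux p (∇ u x)) = ∫ x, f x * ψ n x := fun n => by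
    simpa only [pFlux, map_smul, smul_eq_mul, inner_gradient_right, conj_trivial] using
      h (ψ n) (hψ n) (hψc n)
  simpa [← hψ', heq, inner_gradient_right] using hlhs

end WeakSolution

theorem rpow_norm_mul_inner_sq_le {V : Type*} [NormedAddCommGroup V] [InnerProductSpace ℝ V]
    (r : ℝ) (a b : V) : ‖a‖ ^ (r - 2) * ⟪a, b⟫ ^ 2 ≤ ‖a‖ ^ r * ‖b‖ ^ 2 := by
  rcases eq_or_ne a 0 with rfl | ha
  · simpa using by positivity
  · have hcs : ⟪a, b⟫ ^ 2 ≤ ‖a‖ ^ 2 * ‖b‖ ^ 2 := by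
      rw [← mul_pow]
      exact sq_le_sq.2 (by simpa [abs_mul] using abs_real_inner_le_norm a b)
    calc ‖a‖ ^ (r - 2) * ⟪a, b⟫ ^ 2 ≤ ‖a‖ ^ (r - 2) * (‖a‖ ^ 2 * ‖b‖ ^ 2) := by gcongr
      _ = ‖a‖ ^ r * ‖b‖ ^ 2 := by
        rw [← mul_assoc, ← Real.rpow_add_natCast (norm_ne_zero_iff.2 ha)]
        norm_num

theorem abs_rpow_sub_one_mul_sq {lam : ℝ} (hlam : lam + 1 ≠ 0) (t : ℝ) :
    |t| ^ (lam - 1) * t ^ 2 = |t| ^ (lam + 1) := by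
  rw [← sq_abs, ← Real.rpow_add_natCast' (abs_nonneg t)] <;> ring_nf
  simpa [add_comm] using hlam

theorem continuous_abs_rpow_mul {X : Type*} [TopologicalSpace X] {lam : ℝ} {u : X → ℝ}
    (hlam : 1 ≤ lam) (hu : Continuous u) :
    Continuous fun x => |u x| ^ (lam - 1) * u x :=
  (hu.abs.rpow_const fun _ => Or.inr (by linarith)).mul hu

section StableSolution

variable {E : Type*} [NormedAddCommGroup E] [InnerProductSpace ℝ E] [FiniteDimensional ℝ E]
  [MeasurableSpace E] [BorelSpace E] {p lam : ℝ} {f u : E → ℝ}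

theorem IsWeakPLaplaceSolution.integral_norm_gradient_rpow_mul {ζ : E → ℝ}
    (h : IsWeakPLaplaceSolution p f u) (hp : 1 < p) (hu : ContDiff ℝ 1 u) (hf : Continuous f)
    (hζ : ContDiff ℝ 1 ζ) (hζc : HasCompactSupport ζ) :
    (∫ x, ‖∇ u x‖ ^ p * ζ x) + ∫ x, u x * ⟪pFlux p (∇ u x), ∇ ζ x⟫ = ∫ x, f x * u x * ζ x := by
  have hgrad : ∀ x, ∇ (fun y => u y * ζ y) x = u x • ∇ ζ x + ζ x • ∇ u x := fun x =>
    gradient_mul (hu.differentiable one_ne_zero x) (hζ.differentiable one_ne_zero x)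
  have hflux : Continuous fun x => pFlux p (∇ u x) :=
    (continuous_pFlux hp).comp (continuous_gradient hu)
  have hint₁ : Integrable fun x => ‖∇ u x‖ ^ p * ζ x :=
    (((continuous_gradient hu).norm.rpow_const fun _ => Or.inr (by linarith)).mul
      hζ.continuous).integrable_of_hasCompactSupport hζc.mul_left
  have hint₂ : Integrable fun x => u x * ⟪pFlux p (∇ u x), ∇ ζ x⟫ := by
    refine Continuous.integrable_of_hasCompactSupport (hu.continuous.mul
      (hflux.inner (continuous_gradient hζ))) (HasCompactSupport.intro hζc fun x hx => ?_)
    simp [gradient_eq_zero_of_notMem_tsupport hx]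
  have htest := h.integral_inner_pFlux hp hu hf (hu.mul hζ) hζc.mul_left
  rw [← integral_add hint₁ hint₂]
  simpa only [hgrad, inner_add_right, inner_smul_right, inner_pFlux_self hp, mul_assoc, add_comm,
    mul_comm (ζ _)] using htest

/-- The second variation at `u` of the energy `∫ ‖∇ u‖ ^ p / p - |u| ^ (lam + 1) / (lam + 1)` in
the direction `φ`. -/
noncomputable def pLaplaceSecondVariation (p lam : ℝ) (u φ : E → ℝ) : ℝ :=
  ∫ x, (‖∇ u x‖ ^ (p - 2) * ‖∇ φ x‖ ^ 2 +
    ((p - 2) * ‖∇ u x‖ ^ (p - 4) * ⟪∇ u x, ∇ φ x⟫ ^ 2 - lam * |u x| ^ (lam - 1) * φ x ^ 2))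

/-- Stability outside `K`: the second variation is nonnegative along test functions supported
away from `K`. -/
def IsStableOutside (p lam : ℝ) (u : E → ℝ) (K : Set E) : Prop :=
  ∀ φ : E → ℝ, ContDiff ℝ 1 φ → HasCompactSupport φ → tsupport φ ⊆ Kᶜ →
    0 ≤ pLaplaceSecondVariation p lam u φ

theorem pLaplaceSecondVariation_le {φ : E → ℝ} (hp : 2 ≤ p) (hlam : 1 ≤ lam)
    (hu : ContDiff ℝ 1 u) (hφ : ContDiff ℝ 1 φ) (hφc : HasCompactSupport φ) :
    pLaplaceSecondVariation p lam u φ ≤ (p - 1) * (∫ x, ‖∇ u x‖ ^ (p - 2) * ‖∇ φ x‖ ^ 2) -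
      lam * ∫ x, |u x| ^ (lam - 1) * φ x ^ 2 := by
  have hcu := continuous_gradient hu
  have hcφ := continuous_gradient hφ
  have hgrad : Integrable fun x => ‖∇ u x‖ ^ (p - 2) * ‖∇ φ x‖ ^ 2 := by
    refine Continuous.integrable_of_hasCompactSupport ((hcu.norm.rpow_const fun _ =>
      Or.inr (by linarith)).mul (hcφ.norm.pow 2)) (HasCompactSupport.intro hφc fun x hx => ?_)
    simp [gradient_eq_zero_of_notMem_tsupport hx]
  have hpot : Integrable fun x => |u x| ^ (lam - 1) * φ x ^ 2 := by
    refine Continuous.integrable_of_hasCompactSupport ((hu.continuous.abs.rpow_const fun _ =>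
      Or.inr (by linarith)).mul (hφ.continuous.pow 2)) (HasCompactSupport.intro hφc fun x hx => ?_)
    simp [image_eq_zero_of_notMem_tsupport hx]
  have hle : ∀ x, (p - 2) * ‖∇ u x‖ ^ (p - 4) * ⟪∇ u x, ∇ φ x⟫ ^ 2 ≤
      (p - 2) * (‖∇ u x‖ ^ (p - 2) * ‖∇ φ x‖ ^ 2) := fun x => by
    rw [mul_assoc, show p - 4 = p - 2 - 2 by ring]
    exact mul_le_mul_of_nonneg_left (rpow_norm_mul_inner_sq_le _ _ _) (by linarith)
  have hcross : Integrable fun x => (p - 2) * ‖∇ u x‖ ^ (p - 4) * ⟪∇ u x, ∇ φ x⟫ ^ 2 := by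
    refine (hgrad.const_mul (p - 2)).mono' ?_ (.of_forall fun x => ?_)
    · exact (((hcu.norm.measurable.pow_const _).const_mul _).mul
        ((hcu.inner hcφ).measurable.pow_const 2)).aestronglyMeasurable
    · rw [Real.norm_of_nonneg (mul_nonneg (mul_nonneg (by linarith) (by positivity)) (sq_nonneg _))]
      exact hle x
  rw [← integral_const_mul, ← integral_const_mul, ← integral_sub (hgrad.const_mul _)
    (hpot.const_mul _)]
  refine integral_mono (hgrad.add (hcross.sub (by simpa only [mul_assoc] using hpot.const_mul lam)))
    ((hgrad.const_mul _).sub (hpot.const_mul _)) fun x => ?_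
  dsimp only
  linarith [hle x]

theorem rpow_mul_norm_gradient_mul_sq {V : Type*} [NormedAddCommGroup V] [InnerProductSpace ℝ V]
    [CompleteSpace V] {u η : V → ℝ} {x : V} (hu : DifferentiableAt ℝ u x)
    (hη : DifferentiableAt ℝ η x) (p : ℝ) :
    ‖∇ u x‖ ^ (p - 2) * ‖∇ (fun y => u y * η y) x‖ ^ 2 =
      ⟪pFlux p (∇ u x), ∇ (fun y => u y * (η y * η y)) x⟫ +
        ‖∇ u x‖ ^ (p - 2) * u x ^ 2 * ‖∇ η x‖ ^ 2 := by
  rw [gradient_mul hu hη, gradient_mul hu (hη.fun_mul hη), gradient_mul hη hη, inner_pFlux_left,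
    norm_add_sq_real]
  simp only [norm_smul, mul_pow, Real.norm_eq_abs, sq_abs, inner_add_right, inner_smul_left,
    inner_smul_right, conj_trivial, real_inner_self_eq_norm_sq, real_inner_comm (∇ η x)]
  ring

theorem IsWeakPLaplaceSolution.integral_rpow_mul_norm_gradient_mul_sq {η : E → ℝ}
    (h : IsWeakPLaplaceSolution p f u) (hp : 2 ≤ p) (hu : ContDiff ℝ 1 u) (hf : Continuous f)
    (hη : ContDiff ℝ 1 η) (hηc : HasCompactSupport η) :
    ∫ x, ‖∇ u x‖ ^ (p - 2) * ‖∇ (fun y => u y * η y) x‖ ^ 2 =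
      (∫ x, f x * (u x * (η x * η x))) +
        ∫ x, ‖∇ u x‖ ^ (p - 2) * u x ^ 2 * ‖∇ η x‖ ^ 2 := by
  have hψ : ContDiff ℝ 1 fun y => u y * (η y * η y) := hu.mul (hη.mul hη)
  have hψc : HasCompactSupport fun y => u y * (η y * η y) := hηc.mul_left.mul_left
  have hflux : Continuous fun x => pFlux p (∇ u x) :=
    (continuous_pFlux (by linarith)).comp (continuous_gradient hu)
  have hint₁ : Integrable fun x => ⟪pFlux p (∇ u x), ∇ (fun y => u y * (η y * η y)) x⟫ := by
    refine Continuous.integrable_of_hasCompactSupport (hflux.inner (continuous_gradient hψ))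
      (HasCompactSupport.intro hψc fun x hx => ?_)
    rw [gradient_eq_zero_of_notMem_tsupport hx, inner_zero_right]
  have hint₂ : Integrable fun x => ‖∇ u x‖ ^ (p - 2) * u x ^ 2 * ‖∇ η x‖ ^ 2 := by
    refine Continuous.integrable_of_hasCompactSupport ((((continuous_gradient hu).norm.rpow_const
      fun _ => Or.inr (by linarith)).mul (hu.continuous.pow 2)).mul
      ((continuous_gradient hη).norm.pow 2)) (HasCompactSupport.intro hηc fun x hx => ?_)
    simp [gradient_eq_zero_of_notMem_tsupport hx]
  simp only [rpow_mul_norm_gradient_mul_sq (hu.differentiable one_ne_zero _)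
    (hη.differentiable one_ne_zero _)]
  rw [integral_add hint₁ hint₂, h.integral_inner_pFlux (by linarith) hu hf hψ hψc]

theorem IsStableOutside.integral_rpow_mul_sq_le {K : Set E} {η : E → ℝ}
    (hstable : IsStableOutside p lam u K)
    (hweak : IsWeakPLaplaceSolution p (fun x => |u x| ^ (lam - 1) * u x) u) (hp : 2 ≤ p)
    (hlam : 1 ≤ lam) (hu : ContDiff ℝ 1 u) (hη : ContDiff ℝ 1 η) (hηc : HasCompactSupport η)
    (hηK : tsupport η ⊆ Kᶜ) :
    (lam - (p - 1)) * ∫ x, |u x| ^ (lam + 1) * η x ^ 2 ≤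
      (p - 1) * ∫ x, ‖∇ u x‖ ^ (p - 2) * u x ^ 2 * ‖∇ η x‖ ^ 2 := by
  have hpot : ∀ x, |u x| ^ (lam - 1) * (u x * η x) ^ 2 = |u x| ^ (lam + 1) * η x ^ 2 := fun x => by
    rw [mul_pow, ← mul_assoc, abs_rpow_sub_one_mul_sq (by linarith)]
  have hrhs : ∀ x, |u x| ^ (lam - 1) * u x * (u x * (η x * η x)) = |u x| ^ (lam + 1) * η x ^ 2 :=
    fun x => by rw [← hpot]; ring
  have hgrad := hweak.integral_rpow_mul_norm_gradient_mul_sq hp hu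
    (continuous_abs_rpow_mul hlam hu.continuous) hη hηc
  have hnonneg := (hstable _ (hu.mul hη) hηc.mul_left (tsupport_mul_subset_right.trans hηK)).trans
    (pLaplaceSecondVariation_le hp hlam hu (hu.mul hη) hηc.mul_left)
  simp only [hpot] at hnonneg
  simp only [hrhs] at hgrad
  rw [hgrad] at hnonneg
  linarith

end StableSolution

section EnergyEstimate

theorem hasCompactSupport_rpow_const {X : Type*} [TopologicalSpace X] {ξ : X → ℝ} {q : ℝ}
    (hξ : HasCompactSupport ξ) (hq : q ≠ 0) : HasCompactSupport fun x => ξ x ^ q :=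
  hξ.comp_left (g := (· ^ q)) (Real.zero_rpow hq)

variable {E : Type*} [NormedAddCommGroup E] [InnerProductSpace ℝ E] [FiniteDimensional ℝ E]
  {p l q lam : ℝ} {u ξ : E → ℝ}

/-- The density `‖∇ u‖ ^ p + |u| ^ l` controlled by the energy estimates; for the equation
`-Δ_p u = |u| ^ (lam - 1) u` the exponent is `l = lam + 1`. -/
noncomputable def energyDensity (p l : ℝ) (u : E → ℝ) (x : E) : ℝ := ‖∇ u x‖ ^ p + |u x| ^ l

theorem continuous_energyDensity (hp : 0 ≤ p) (hl : 0 ≤ l) (hu : ContDiff ℝ 1 u) :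
    Continuous (energyDensity p l u) :=
  ((continuous_gradient hu).norm.rpow_const fun _ => Or.inr hp).add
    (hu.continuous.abs.rpow_const fun _ => Or.inr hl)

theorem energyDensity_nonneg (x : E) : 0 ≤ energyDensity p l u x :=
  add_nonneg (by positivity) (by positivity)

theorem gradient_term_abs_le (hp : 1 < p) (hq : 1 ≤ q) (hξ : Differentiable ℝ ξ)
    (hξ0 : ∀ x, 0 ≤ ξ x) (x : E) :
    |u x * ⟪pFlux p (∇ u x), ∇ (fun y => ξ y ^ q) x⟫| ≤
      q * (‖∇ u x‖ ^ (p - 1) * |u x| ^ (1 : ℝ) * ‖∇ ξ x‖ ^ (1 : ℝ) * ξ x ^ (q - 1)) := by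
  have hpow : 0 ≤ ξ x ^ (q - 1) := Real.rpow_nonneg (hξ0 x) _
  rw [gradient_rpow_const (hξ x) hq, inner_smul_right, abs_mul, abs_mul, Real.rpow_one,
    Real.rpow_one, abs_of_nonneg (by positivity : 0 ≤ q * ξ x ^ (q - 1))]
  calc |u x| * (q * ξ x ^ (q - 1) * |⟪pFlux p (∇ u x), ∇ ξ x⟫|)
      ≤ |u x| * (q * ξ x ^ (q - 1) * (‖∇ u x‖ ^ (p - 1) * ‖∇ ξ x‖)) := by
        gcongr
        exact abs_inner_pFlux_le hp _ _
    _ = q * (‖∇ u x‖ ^ (p - 1) * |u x| * ‖∇ ξ x‖ * ξ x ^ (q - 1)) := by ring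

theorem norm_gradient_rpow_half_sq (hq : 2 ≤ q) (hξ : Differentiable ℝ ξ) (hξ0 : ∀ x, 0 ≤ ξ x)
    (x : E) :
    ‖∇ (fun y => ξ y ^ (q / 2)) x‖ ^ 2 = (q / 2) ^ 2 * (‖∇ ξ x‖ ^ (2 : ℝ) * ξ x ^ (q - 2)) := by
  have hpow : (ξ x ^ (q / 2 - 1)) ^ 2 = ξ x ^ (q - 2) := by
    rw [← Real.rpow_mul_natCast (hξ0 x)]
    ring_nf
  rw [gradient_rpow_const (hξ x) (by linarith), norm_smul, mul_pow, Real.norm_eq_abs, sq_abs,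
    mul_pow, hpow, Real.rpow_two]
  ring

variable [MeasurableSpace E] [BorelSpace E]

theorem integrable_norm_gradient_rpow (hξ : ContDiff ℝ 1 ξ) (hξc : HasCompactSupport ξ)
    (hq : 0 < q) : Integrable fun x => ‖∇ ξ x‖ ^ q :=
  Continuous.integrable_of_hasCompactSupport
    ((continuous_gradient hξ).norm.rpow_const fun _ => Or.inr hq.le)
    (hasCompactSupport_rpow_const (hasCompactSupport_gradient hξc).norm hq.ne')

theorem integrable_energyDensity_mul {ζ : E → ℝ} (hp : 0 ≤ p) (hl : 0 ≤ l)
    (hu : ContDiff ℝ 1 u) (hζ : Continuous ζ) (hζc : HasCompactSupport ζ) :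
    Integrable fun x => energyDensity p l u x * ζ x :=
  ((continuous_energyDensity hp hl hu).mul hζ).integrable_of_hasCompactSupport hζc.mul_left

theorem exists_integral_rpow_mul_cutoff_le {j K ε : ℝ} (hlqp : l.HolderTriple q p) (hj : 0 < j)
    (hjp : j ≤ p) (hK : 0 ≤ K) (hε : 0 < ε) (hu : ContDiff ℝ 1 u) :
    ∃ C, ∀ ξ : E → ℝ, ContDiff ℝ 1 ξ → HasCompactSupport ξ → (∀ x, 0 ≤ ξ x) →
      ∫ x, K * (‖∇ u x‖ ^ (p - j) * |u x| ^ j * ‖∇ ξ x‖ ^ j * ξ x ^ (q - j)) ≤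
        ε * (∫ x, energyDensity p l u x * ξ x ^ q) + C * ∫ x, ‖∇ ξ x‖ ^ q := by
  obtain ⟨C, hyoung⟩ := exists_rpow_mul_cutoff_le hlqp hj hjp hK hε
  refine ⟨C, fun ξ hξ hξc hξ0 => ?_⟩
  have hW := (integrable_energyDensity_mul hlqp.pos'.le hlqp.left_pos.le hu
    (hξ.continuous.rpow_const fun _ => Or.inr hlqp.right_pos.le)
    (hasCompactSupport_rpow_const hξc hlqp.right_pos.ne')).const_mul ε
  have hZ := (integrable_norm_gradient_rpow hξ hξc hlqp.right_pos).const_mul C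
  rw [← integral_const_mul, ← integral_const_mul, ← integral_add hW hZ]
  refine integral_mono_of_nonneg (.of_forall fun x => ?_) (hW.add hZ) (.of_forall fun x => ?_)
  · have := hξ0 x
    dsimp only [Pi.zero_apply]
    positivity
  · exact hyoung _ _ _ _ (norm_nonneg _) (abs_nonneg _) (norm_nonneg _) (hξ0 x)

theorem integrable_rpow_mul_cutoff {j : ℝ} (hj : 0 < j) (hjp : j ≤ p) (hjq : j ≤ q)
    (hu : ContDiff ℝ 1 u) (hξ : ContDiff ℝ 1 ξ) (hξc : HasCompactSupport ξ) (K : ℝ) :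
    Integrable fun x => K * (‖∇ u x‖ ^ (p - j) * |u x| ^ j * ‖∇ ξ x‖ ^ j * ξ x ^ (q - j)) := by
  refine Continuous.integrable_of_hasCompactSupport (continuous_const.mul
    ((((continuous_gradient hu).norm.rpow_const fun _ => Or.inr (sub_nonneg.2 hjp)).mul
      (hu.continuous.abs.rpow_const fun _ => Or.inr hj.le)).mul
      ((continuous_gradient hξ).norm.rpow_const fun _ => Or.inr hj.le) |>.mul
      (hξ.continuous.rpow_const fun _ => Or.inr (sub_nonneg.2 hjq))))
    (HasCompactSupport.intro hξc fun x hx => ?_)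
  simp [gradient_eq_zero_of_notMem_tsupport hx, Real.zero_rpow hj.ne']

theorem neg_integral_gradient_term_le (hp : 1 < p) (hq : 1 ≤ q) (hu : ContDiff ℝ 1 u)
    (hξ : ContDiff ℝ 1 ξ) (hξc : HasCompactSupport ξ) (hξ0 : ∀ x, 0 ≤ ξ x) :
    -∫ x, u x * ⟪pFlux p (∇ u x), ∇ (fun y => ξ y ^ q) x⟫ ≤
      ∫ x, q * (‖∇ u x‖ ^ (p - 1) * |u x| ^ (1 : ℝ) * ‖∇ ξ x‖ ^ (1 : ℝ) * ξ x ^ (q - 1)) :=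
  (neg_le_abs _).trans <| abs_integral_le_integral_abs.trans <|
    integral_mono_of_nonneg (.of_forall fun _ => abs_nonneg _)
      (integrable_rpow_mul_cutoff one_pos hp.le hq hu hξ hξc q)
      (.of_forall (gradient_term_abs_le hp hq (hξ.differentiable one_ne_zero) hξ0))

theorem IsStableOutside.mul_integral_rpow_mul_cutoff_le {K : Set E}
    (hstable : IsStableOutside p lam u K)
    (hweak : IsWeakPLaplaceSolution p (fun x => |u x| ^ (lam - 1) * u x) u) (hp : 2 ≤ p)
    (hlam : 1 ≤ lam) (hq : 2 ≤ q) (hu : ContDiff ℝ 1 u) (hξ : ContDiff ℝ 1 ξ)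
    (hξc : HasCompactSupport ξ) (hξK : tsupport ξ ⊆ Kᶜ) (hξ0 : ∀ x, 0 ≤ ξ x) :
    (lam - (p - 1)) * ∫ x, |u x| ^ (lam + 1) * ξ x ^ q ≤
      ∫ x, (p - 1) * (q / 2) ^ 2 *
        (‖∇ u x‖ ^ (p - 2) * |u x| ^ (2 : ℝ) * ‖∇ ξ x‖ ^ (2 : ℝ) * ξ x ^ (q - 2)) := by
  have hη : ContDiff ℝ 1 fun x => ξ x ^ (q / 2) :=
    hξ.rpow_const_of_le (by norm_num; linarith)
  have hηK : tsupport (fun x => ξ x ^ (q / 2)) ⊆ Kᶜ :=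
    (tsupport_comp_subset (g := (· ^ (q / 2))) (Real.zero_rpow (by linarith)) ξ).trans hξK
  have hpow : ∀ x, (ξ x ^ (q / 2)) ^ 2 = ξ x ^ q := fun x => by
    rw [← Real.rpow_mul_natCast (hξ0 x)]
    norm_num
  have hcacc := hstable.integral_rpow_mul_sq_le hweak hp hlam hu hη
    (hasCompactSupport_rpow_const hξc (by linarith)) hηK
  simp only [hpow, norm_gradient_rpow_half_sq hq (hξ.differentiable one_ne_zero) hξ0,
    ← integral_const_mul] at hcacc ⊢
  refine hcacc.trans_eq (integral_congr_ae (.of_forall fun x => ?_))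
  simp only [Real.rpow_two, sq_abs]
  ring

theorem IsWeakPLaplaceSolution.integral_norm_gradient_rpow_mul_add {ζ : E → ℝ}
    (hweak : IsWeakPLaplaceSolution p (fun x => |u x| ^ (lam - 1) * u x) u) (hp : 1 < p)
    (hlam : 1 ≤ lam) (hu : ContDiff ℝ 1 u) (hζ : ContDiff ℝ 1 ζ) (hζc : HasCompactSupport ζ) :
    (∫ x, ‖∇ u x‖ ^ p * ζ x) + ∫ x, u x * ⟪pFlux p (∇ u x), ∇ ζ x⟫ =
      ∫ x, |u x| ^ (lam + 1) * ζ x := by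
  rw [hweak.integral_norm_gradient_rpow_mul hp hu (continuous_abs_rpow_mul hlam hu.continuous)
    hζ hζc]
  refine integral_congr_ae (.of_forall fun x => ?_)
  dsimp only
  rw [← abs_rpow_sub_one_mul_sq (by linarith)]
  ring

theorem IsWeakPLaplaceSolution.integral_energyDensity_mul {ζ : E → ℝ}
    (hweak : IsWeakPLaplaceSolution p (fun x => |u x| ^ (lam - 1) * u x) u) (hp : 1 < p)
    (hlam : 1 ≤ lam) (hu : ContDiff ℝ 1 u) (hζ : ContDiff ℝ 1 ζ) (hζc : HasCompactSupport ζ) :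
    ∫ x, energyDensity p (lam + 1) u x * ζ x =
      2 * (∫ x, |u x| ^ (lam + 1) * ζ x) - ∫ x, u x * ⟪pFlux p (∇ u x), ∇ ζ x⟫ := by
  have hint₁ : Integrable fun x => ‖∇ u x‖ ^ p * ζ x :=
    (((continuous_gradient hu).norm.rpow_const fun _ => Or.inr (by linarith)).mul
      hζ.continuous).integrable_of_hasCompactSupport hζc.mul_left
  have hint₂ : Integrable fun x => |u x| ^ (lam + 1) * ζ x :=
    ((hu.continuous.abs.rpow_const fun _ => Or.inr (by linarith)).mul
      hζ.continuous).integrable_of_hasCompactSupport hζc.mul_left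
  simp only [energyDensity, add_mul]
  rw [integral_add hint₁ hint₂]
  linear_combination hweak.integral_norm_gradient_rpow_mul_add hp hlam hu hζ hζc

theorem IsStableOutside.exists_integral_energyDensity_le {K : Set E}
    (hstable : IsStableOutside p lam u K)
    (hweak : IsWeakPLaplaceSolution p (fun x => |u x| ^ (lam - 1) * u x) u) (hp : 2 ≤ p)
    (hlam : p - 1 < lam) (hlqp : (lam + 1).HolderTriple q p) (hu : ContDiff ℝ 1 u) :
    ∃ C, ∀ ξ : E → ℝ, ContDiff ℝ 1 ξ → HasCompactSupport ξ → tsupport ξ ⊆ Kᶜ →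
      (∀ x, 0 ≤ ξ x) →
      ∫ x, energyDensity p (lam + 1) u x * ξ x ^ q ≤ C * ∫ x, ‖∇ ξ x‖ ^ q := by
  have hq : p < q := hlqp.symm.lt
  set δ := lam - (p - 1)
  have hδ : 0 < δ := sub_pos.2 hlam
  obtain ⟨C₁, hfirst⟩ := exists_integral_rpow_mul_cutoff_le (j := 1) hlqp one_pos
    (by linarith) (by linarith : 0 ≤ q) (by norm_num : (0 : ℝ) < 1 / 4) hu
  obtain ⟨C₂, hsecond⟩ := exists_integral_rpow_mul_cutoff_le (j := 2) hlqp two_pos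
    hp (mul_nonneg (by linarith) (sq_nonneg _) : 0 ≤ (p - 1) * (q / 2) ^ 2)
    (by positivity : 0 < δ / 8) hu
  refine ⟨2 * (2 * C₂ + δ * C₁) / δ, fun ξ hξ hξc hξK hξ0 => ?_⟩
  have hequation := hweak.integral_energyDensity_mul (ζ := fun x => ξ x ^ q) (by linarith)
    (by linarith) hu (hξ.rpow_const_of_le (by norm_num; linarith))
    (hasCompactSupport_rpow_const hξc (by linarith))
  have hflux := (neg_integral_gradient_term_le (by linarith) (by linarith) hu hξ hξc hξ0).trans
    (hfirst ξ hξ hξc hξ0)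
  have hpot := (hstable.mul_integral_rpow_mul_cutoff_le hweak hp (by linarith) (by linarith)
    hu hξ hξc hξK hξ0).trans (hsecond ξ hξ hξc hξ0)
  rw [div_mul_eq_mul_div, le_div_iff₀ hδ]
  linear_combination 2 * δ * hequation + 2 * δ * hflux + 4 * hpot

end EnergyEstimate

section Cutoff

variable {E : Type*} [NormedAddCommGroup E] [InnerProductSpace ℝ E] {R : ℝ} {x : E}

/-- A fixed smooth bump, equal to `1` on the unit ball and supported in the ball of radius `2`. -/
noncomputable def unitBump (E : Type*) [NormedAddCommGroup E] :
    ContDiffBump (0 : E) := ⟨1, 2, one_pos, one_lt_two⟩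

/-- The rescaled bump `x ↦ unitBump (x / R)`: the standard cutoff at scale `R`, equal to `1` for
`‖x‖ ≤ R` and to `0` for `‖x‖ ≥ 2 R`. -/
noncomputable def cutoff (R : ℝ) (x : E) : ℝ := unitBump E (R⁻¹ • x)

theorem contDiff_cutoff {n : ℕ∞} (R : ℝ) : ContDiff ℝ n (cutoff R : E → ℝ) :=
  (unitBump E).contDiff.comp (contDiff_const_smul _)

theorem cutoff_nonneg (R : ℝ) (x : E) : 0 ≤ cutoff R x := (unitBump E).nonneg

theorem cutoff_le_one (R : ℝ) (x : E) : cutoff R x ≤ 1 := (unitBump E).le_one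

theorem norm_inv_smul (hR : 0 < R) (x : E) : ‖R⁻¹ • x‖ = ‖x‖ / R := by
  rw [norm_smul, norm_inv, Real.norm_of_nonneg hR.le, inv_mul_eq_div]

theorem cutoff_eq_one (hR : 0 < R) (hx : ‖x‖ ≤ R) : cutoff R x = 1 :=
  (unitBump E).one_of_mem_closedBall <| mem_closedBall_zero_iff.2 <| by
    rwa [norm_inv_smul hR, unitBump, div_le_one hR]

theorem cutoff_eq_zero (hR : 0 < R) (hx : 2 * R ≤ ‖x‖) : cutoff R x = 0 :=
  (unitBump E).zero_of_le_dist <| by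
    rwa [dist_zero_right, norm_inv_smul hR, unitBump, le_div_iff₀ hR]

theorem eventually_cutoff_eq_one (x : E) : ∀ᶠ R in atTop, cutoff R x = 1 := by
  filter_upwards [eventually_gt_atTop 0, eventually_ge_atTop ‖x‖] with R hR hx
  exact cutoff_eq_one hR hx

theorem cutoff_le_cutoff {S : ℝ} (hS : 0 < S) (hSR : 2 * S ≤ R) (x : E) :
    cutoff S x ≤ cutoff R x := by
  rcases le_total ‖x‖ R with hx | hx
  · exact (cutoff_le_one S x).trans_eq (cutoff_eq_one (by linarith) hx).symm
  · exact (cutoff_eq_zero hS (hSR.trans hx)).trans_le (cutoff_nonneg R x)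

variable [FiniteDimensional ℝ E]

theorem hasCompactSupport_cutoff (hR : 0 < R) : HasCompactSupport (cutoff R : E → ℝ) :=
  (unitBump E).hasCompactSupport.comp_smul (inv_ne_zero hR.ne')

theorem gradient_cutoff_eq_zero_of_norm_le (hR : 0 < R) (hx : ‖x‖ ≤ R) : ∇ (cutoff R) x = 0 := by
  have hmax : IsLocalMax (cutoff R) x :=
    .of_forall fun y => (cutoff_le_one R y).trans_eq (cutoff_eq_one hR hx).symm
  rw [gradient, hmax.fderiv_eq_zero, map_zero]

theorem gradient_cutoff_eq_zero_of_le_norm (hR : 0 < R) (hx : 2 * R ≤ ‖x‖) :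
    ∇ (cutoff R) x = 0 := by
  have hmin : IsLocalMin (cutoff R) x :=
    .of_forall fun y => (cutoff_eq_zero hR hx).trans_le (cutoff_nonneg R y)
  rw [gradient, hmin.fderiv_eq_zero, map_zero]

theorem gradient_cutoff (R : ℝ) (x : E) :
    ∇ (cutoff R) x = R⁻¹ • ∇ (unitBump E) (R⁻¹ • x) :=
  gradient_comp_smul _ _ _

theorem exists_norm_mul_norm_gradient_cutoff_le (E : Type*) [NormedAddCommGroup E]
    [InnerProductSpace ℝ E] [FiniteDimensional ℝ E] :
    ∃ M, ∀ R > 0, ∀ x : E, ‖x‖ * ‖∇ (cutoff R) x‖ ≤ M := by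
  have hcont : Continuous fun y : E => ‖y‖ * ‖∇ (unitBump E) y‖ :=
    continuous_norm.mul (continuous_gradient (unitBump E).contDiff).norm
  obtain ⟨M, hM⟩ := (hasCompactSupport_gradient
    (unitBump E).hasCompactSupport).norm.mul_left.exists_bound_of_continuous hcont
  refine ⟨M, fun R hR x => (le_of_eq ?_).trans ((le_abs_self _).trans (hM (R⁻¹ • x)))⟩
  rw [Pi.mul_apply, gradient_cutoff, norm_inv_smul hR, norm_inv_smul hR]
  ring

variable [MeasurableSpace E] [BorelSpace E] {q : ℝ}

theorem integral_norm_gradient_cutoff_rpow (hR : 0 < R) (q : ℝ) :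
    ∫ x : E, ‖∇ (cutoff R) x‖ ^ q =
      R ^ (Module.finrank ℝ E - q) * ∫ x : E, ‖∇ (unitBump E) x‖ ^ q := by
  have hscale : ∀ x : E, ‖∇ (cutoff R) x‖ ^ q = R⁻¹ ^ q * ‖∇ (unitBump E) (R⁻¹ • x)‖ ^ q :=
    fun x => by
      rw [gradient_cutoff, norm_smul, Real.norm_of_nonneg (by positivity),
        Real.mul_rpow (by positivity) (norm_nonneg _)]
  simp only [hscale]
  rw [integral_const_mul, Measure.integral_comp_inv_smul_of_nonneg volume
    (fun y => ‖∇ (unitBump E) y‖ ^ q) hR.le, smul_eq_mul, ← mul_assoc, Real.rpow_sub hR,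
    Real.rpow_natCast, Real.inv_rpow hR.le, div_eq_inv_mul]

theorem tendsto_integral_norm_gradient_cutoff_rpow (hq : Module.finrank ℝ E < q) :
    Tendsto (fun R => ∫ x : E, ‖∇ (cutoff R) x‖ ^ q) atTop (𝓝 0) := by
  have hpow := (tendsto_rpow_neg_atTop (sub_pos.2 hq)).mul_const
    (∫ x : E, ‖∇ (unitBump E) x‖ ^ q)
  rw [zero_mul, neg_sub] at hpow
  refine hpow.congr' ?_
  filter_upwards [eventually_gt_atTop 0] with R hR
  exact (integral_norm_gradient_cutoff_rpow hR q).symm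

theorem tendsto_integral_mul_cutoff {h : E → ℝ} (hh : Integrable h) :
    Tendsto (fun R => ∫ x, h x * cutoff R x) atTop (𝓝 (∫ x, h x)) := by
  refine tendsto_integral_filter_of_dominated_convergence (fun x => ‖h x‖)
    (.of_forall fun R => hh.aestronglyMeasurable.mul
      (contDiff_cutoff (n := 0) R).continuous.aestronglyMeasurable)
    (.of_forall fun R => .of_forall fun x => ?_) hh.norm (.of_forall fun x => ?_)
  · rw [norm_mul, Real.norm_of_nonneg (cutoff_nonneg R x)]
    exact mul_le_of_le_one_right (norm_nonneg _) (cutoff_le_one R x)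
  · refine tendsto_const_nhds.congr' ?_
    filter_upwards [eventually_cutoff_eq_one x] with R hR
    rw [hR, mul_one]

theorem tendsto_integral_zero_of_eq_zero_of_norm_le {H : E → ℝ} {e : ℝ → E → ℝ}
    (hH : Integrable H) (hcont : ∀ R, Continuous (e R)) (hle : ∀ R > 0, ∀ x, |e R x| ≤ H x)
    (hzero : ∀ R > 0, ∀ x, ‖x‖ ≤ R → e R x = 0) :
    Tendsto (fun R => ∫ x, e R x) atTop (𝓝 0) := by
  rw [← integral_zero E ℝ]
  refine tendsto_integral_filter_of_dominated_convergence H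
    (.of_forall fun R => (hcont R).aestronglyMeasurable)
    ((eventually_gt_atTop 0).mono fun R hR => .of_forall (hle R hR)) hH
    (.of_forall fun x => tendsto_const_nhds.congr' ?_)
  filter_upwards [eventually_gt_atTop 0, eventually_ge_atTop ‖x‖] with R hR hx
  exact (hzero R hR x hx).symm

end Cutoff

section AnnularCutoff

variable {E : Type*} [NormedAddCommGroup E] [InnerProductSpace ℝ E] {R S : ℝ} {x : E}

theorem cutoff_sub_cutoff_eq_one (hS : 0 < S) (hSx : 2 * S ≤ ‖x‖) (hxR : ‖x‖ ≤ R) :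
    cutoff R x - cutoff S x = 1 := by
  rw [cutoff_eq_one (by linarith) hxR, cutoff_eq_zero hS hSx, sub_zero]

theorem tsupport_cutoff_sub_cutoff_subset (hS : 0 < S) (hSR : S ≤ R) :
    tsupport (fun x : E => cutoff R x - cutoff S x) ⊆ (ball 0 S)ᶜ := by
  refine closure_minimal (fun x hx hxS => hx ?_) isOpen_ball.isClosed_compl
  have hle : ‖x‖ ≤ S := (mem_ball_zero_iff.1 hxS).le
  simp only [cutoff_eq_one hS hle, cutoff_eq_one (hS.trans_le hSR) (hle.trans hSR), sub_self]

variable [FiniteDimensional ℝ E] {q : ℝ}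

theorem norm_gradient_cutoff_sub_cutoff_rpow (hS : 0 < S) (hSR : 2 * S ≤ R) (hq : q ≠ 0) (x : E) :
    ‖∇ (fun y => cutoff R y - cutoff S y) x‖ ^ q = ‖∇ (cutoff R) x‖ ^ q + ‖∇ (cutoff S) x‖ ^ q := by
  have hdiff : ∀ T, DifferentiableAt ℝ (cutoff T) x := fun T =>
    (contDiff_cutoff (n := 1) T).differentiable one_ne_zero x
  rw [gradient_sub (hdiff R) (hdiff S)]
  rcases le_total ‖x‖ R with hx | hx
  · rw [gradient_cutoff_eq_zero_of_norm_le (by linarith) hx, zero_sub, norm_neg, norm_zero,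
      Real.zero_rpow hq, zero_add]
  · rw [gradient_cutoff_eq_zero_of_le_norm hS (hSR.trans hx), sub_zero, norm_zero,
      Real.zero_rpow hq, add_zero]

variable [MeasurableSpace E] [BorelSpace E] {W : E → ℝ}

theorem setIntegral_closedBall_diff_le (hW : Continuous W) (hW0 : ∀ x, 0 ≤ W x) (hS : 0 < S)
    (hSR : 2 * S ≤ R) (hq : 0 < q) :
    ∫ x in closedBall 0 R ∩ (closedBall 0 (2 * S))ᶜ, W x ≤
      ∫ x, W x * (cutoff R x - cutoff S x) ^ q := by
  have hcont : ∀ T, Continuous (cutoff T : E → ℝ) := fun T =>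
    (contDiff_cutoff (n := 0) T).continuous
  have hR : 0 < R := by linarith
  have hint : Integrable fun x => W x * (cutoff R x - cutoff S x) ^ q :=
    (hW.mul (((hcont R).sub (hcont S)).rpow_const
      fun _ => Or.inr hq.le)).integrable_of_hasCompactSupport
      (hasCompactSupport_rpow_const
        ((hasCompactSupport_cutoff hR).sub (hasCompactSupport_cutoff hS)) hq.ne').mul_left
  have hone : EqOn W (fun x => W x * (cutoff R x - cutoff S x) ^ q)
      (closedBall 0 R ∩ (closedBall 0 (2 * S))ᶜ) := fun x hx => by
    simp only [mem_inter_iff, mem_compl_iff, mem_closedBall_zero_iff, not_le] at hx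
    simp only [cutoff_sub_cutoff_eq_one hS hx.2.le hx.1, Real.one_rpow, mul_one]
  rw [setIntegral_congr_fun
    (measurableSet_closedBall.inter measurableSet_closedBall.compl) hone]
  exact setIntegral_le_integral hint <| .of_forall fun x =>
    mul_nonneg (hW0 x) (Real.rpow_nonneg (sub_nonneg.2 (cutoff_le_cutoff hS hSR x)) q)

theorem eventually_integral_mul_cutoff_sub_cutoff_le {C : ℝ} (hS : 0 < S)
    (hq : Module.finrank ℝ E < q)
    (hle : ∀ ξ : E → ℝ, ContDiff ℝ 1 ξ → HasCompactSupport ξ → tsupport ξ ⊆ (ball 0 S)ᶜ →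
      (∀ x, 0 ≤ ξ x) → ∫ x, W x * ξ x ^ q ≤ C * ∫ x, ‖∇ ξ x‖ ^ q) :
    ∀ᶠ R in atTop, ∫ x, W x * (cutoff R x - cutoff S x) ^ q ≤
      C * (∫ x : E, ‖∇ (cutoff S) x‖ ^ q) + 1 := by
  have hq0 : 0 < q := (Nat.cast_nonneg _).trans_lt hq
  have hlim := ((tendsto_integral_norm_gradient_cutoff_rpow hq).add_const
    (∫ x : E, ‖∇ (cutoff S) x‖ ^ q)).const_mul C
  rw [zero_add] at hlim
  filter_upwards [hlim.eventually_le_const (lt_add_one _), eventually_ge_atTop (2 * S)]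
    with R hbound hSR
  have hR : 0 < R := by linarith
  have hgrad : ∀ {T : ℝ}, 0 < T → Integrable fun x : E => ‖∇ (cutoff T) x‖ ^ q := fun hT =>
    integrable_norm_gradient_rpow (contDiff_cutoff _) (hasCompactSupport_cutoff hT) hq0
  refine (hle _ ((contDiff_cutoff R).sub (contDiff_cutoff S))
    ((hasCompactSupport_cutoff hR).sub (hasCompactSupport_cutoff hS))
    (tsupport_cutoff_sub_cutoff_subset hS (by linarith))
    fun x => sub_nonneg.2 (cutoff_le_cutoff hS hSR x)).trans (le_of_eq_of_le ?_ hbound)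
  simp only [norm_gradient_cutoff_sub_cutoff_rpow hS hSR hq0.ne']
  rw [integral_add (hgrad hR) (hgrad hS)]

theorem integrable_of_integral_mul_rpow_le {C : ℝ} {K : Set E} (hW : Continuous W)
    (hW0 : ∀ x, 0 ≤ W x) (hK : IsCompact K) (hq : Module.finrank ℝ E < q)
    (hle : ∀ ξ : E → ℝ, ContDiff ℝ 1 ξ → HasCompactSupport ξ → tsupport ξ ⊆ Kᶜ →
      (∀ x, 0 ≤ ξ x) → ∫ x, W x * ξ x ^ q ≤ C * ∫ x, ‖∇ ξ x‖ ^ q) :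
    Integrable W := by
  obtain ⟨S, hS, hKS⟩ := hK.isBounded.subset_ball_lt 0 0
  have hlocal : ∀ R, IntegrableOn W (closedBall 0 R) := fun R =>
    hW.continuousOn.integrableOn_compact (isCompact_closedBall 0 R)
  have houter : IntegrableOn W (closedBall 0 (2 * S))ᶜ := by
    refine (aecover_closedBall tendsto_id).integrable_of_integral_bounded_of_nonneg_ae
      (C * (∫ x : E, ‖∇ (cutoff S) x‖ ^ q) + 1)
      (fun R => (hlocal R).mono_measure Measure.restrict_le_self) (.of_forall hW0) ?_
    filter_upwards [eventually_ge_atTop (2 * S), eventually_integral_mul_cutoff_sub_cutoff_le hS hq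
      fun ξ hξ hξc hξS => hle ξ hξ hξc (hξS.trans (compl_subset_compl.2 hKS))] with R hSR hbound
    rw [Measure.restrict_restrict measurableSet_closedBall]
    exact (setIntegral_closedBall_diff_le hW hW0 hS hSR
      ((Nat.cast_nonneg _).trans_lt hq)).trans hbound
  rw [← integrableOn_univ, ← union_compl_self (closedBall 0 (2 * S))]
  exact (hlocal _).union houter

end AnnularCutoff

section GlobalEnergy

variable {E : Type*} [NormedAddCommGroup E] [InnerProductSpace ℝ E] [FiniteDimensional ℝ E]
  [MeasurableSpace E] [BorelSpace E] {p q lam : ℝ} {u : E → ℝ}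

theorem IsStableOutside.integrable_energyDensity {K : Set E} (hstable : IsStableOutside p lam u K)
    (hweak : IsWeakPLaplaceSolution p (fun x => |u x| ^ (lam - 1) * u x) u) (hK : IsCompact K)
    (hp : 2 ≤ p) (hlam : p - 1 < lam) (hlqp : (lam + 1).HolderTriple q p)
    (hq : Module.finrank ℝ E < q) (hu : ContDiff ℝ 1 u) :
    Integrable (energyDensity p (lam + 1) u) := by
  obtain ⟨C, hle⟩ := hstable.exists_integral_energyDensity_le hweak hp hlam hlqp hu
  exact integrable_of_integral_mul_rpow_le
    (continuous_energyDensity (by linarith) (by linarith) hu) energyDensity_nonneg hK hq hle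

theorem integrable_norm_gradient_rpow_of_energyDensity {l : ℝ} (hp : 0 ≤ p)
    (hW : Integrable (energyDensity p l u)) (hu : ContDiff ℝ 1 u) :
    Integrable fun x => ‖∇ u x‖ ^ p :=
  hW.mono' ((continuous_gradient hu).norm.rpow_const fun _ => Or.inr hp).aestronglyMeasurable
    (.of_forall fun x => by
      rw [Real.norm_of_nonneg (by positivity)]
      exact le_add_of_nonneg_right (by positivity))

theorem integrable_abs_rpow_of_energyDensity {l : ℝ} (hl : 0 ≤ l)
    (hW : Integrable (energyDensity p l u)) (hu : Continuous u) :
    Integrable fun x => |u x| ^ l :=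
  hW.mono' (hu.abs.rpow_const fun _ => Or.inr hl).aestronglyMeasurable
    (.of_forall fun x => by
      rw [Real.norm_of_nonneg (by positivity)]
      exact le_add_of_nonneg_left (by positivity))

end GlobalEnergy

section Dilation

theorem hasDerivAt_integral_of_eq_zero_of_notMem_compact {X : Type*} [TopologicalSpace X]
    [T2Space X] [MeasurableSpace X] [OpensMeasurableSpace X] {μ : Measure X}
    [IsFiniteMeasureOnCompacts μ] {F F' : ℝ → X → ℝ} {t₀ : ℝ} {K : Set X} (hK : IsCompact K)
    (hF : ∀ t, Continuous (F t)) (hF' : Continuous (Function.uncurry F'))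
    (hderiv : ∀ t x, HasDerivAt (F · x) (F' t x) t) (hzero : ∀ᶠ t in 𝓝 t₀, ∀ x ∉ K, F t x = 0) :
    HasDerivAt (fun t => ∫ x, F t x ∂μ) (∫ x, F' t₀ x ∂μ) t₀ := by
  obtain ⟨r, hr, hball⟩ := Metric.eventually_nhds_iff_ball.1 hzero
  obtain ⟨B, hB⟩ := ((isCompact_closedBall t₀ r).prod hK).exists_bound_of_continuousOn
    hF'.continuousOn
  have hzero' : ∀ t ∈ ball t₀ r, ∀ x ∉ K, F' t x = 0 := fun t ht x hx => by
    refine (hderiv t x).unique ((hasDerivAt_const t (0 : ℝ)).congr_of_eventuallyEq ?_)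
    filter_upwards [isOpen_ball.mem_nhds ht] with s hs
    exact hball s hs x hx
  refine (hasDerivAt_integral_of_dominated_loc_of_deriv_le (bound := K.indicator fun _ => B)
    (ball_mem_nhds t₀ hr) (.of_forall fun t => (hF t).aestronglyMeasurable)
    ((hF t₀).integrable_of_hasCompactSupport
      (HasCompactSupport.intro hK (hball t₀ (mem_ball_self hr))))
    (hF'.uncurry_left t₀).aestronglyMeasurable (.of_forall fun x t ht => ?_)
    ((integrable_indicator_iff hK.measurableSet).2
      (continuousOn_const.integrableOn_compact hK))
    (.of_forall fun x t _ => hderiv t x)).2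
  by_cases hx : x ∈ K
  · rw [indicator_of_mem hx]
    exact hB (t, x) ⟨ball_subset_closedBall ht, hx⟩
  · rw [indicator_of_notMem hx, hzero' t ht x hx, norm_zero]

variable {E : Type*} [NormedAddCommGroup E] [InnerProductSpace ℝ E] [FiniteDimensional ℝ E]
  {η g w : E → ℝ}

theorem hasDerivAt_comp_smul (hw : Differentiable ℝ w) (t : ℝ) (x : E) :
    HasDerivAt (fun s : ℝ => w (s • x)) ⟪∇ w (t • x), x⟫ t := by
  rw [inner_gradient_left]
  simpa [Function.comp_def] using
    (hw (t • x)).hasFDerivAt.comp_hasDerivAt t ((hasDerivAt_id t).smul_const x)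

variable [MeasurableSpace E] [BorelSpace E]

theorem hasDerivAt_integral_mul_comp_smul {K : Set E} (hK : IsCompact K) (hg : Continuous g)
    (hw : ContDiff ℝ 1 w) (hzero : ∀ᶠ t : ℝ in 𝓝 1, ∀ x ∉ K, g x * w (t • x) = 0) :
    HasDerivAt (fun t : ℝ => ∫ x, g x * w (t • x)) (∫ x, g x * ⟪∇ w x, x⟫) 1 := by
  have hcont : Continuous fun z : ℝ × E => g z.2 * ⟪∇ w (z.1 • z.2), z.2⟫ :=
    (hg.comp continuous_snd).mul
      (((continuous_gradient hw).comp (continuous_fst.smul continuous_snd)).inner continuous_snd)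
  simpa only [one_smul] using hasDerivAt_integral_of_eq_zero_of_notMem_compact
    (F := fun t x => g x * w (t • x)) (F' := fun t x => g x * ⟪∇ w (t • x), x⟫) hK
    (fun t => hg.mul (hw.continuous.comp (continuous_const_smul t))) hcont
    (fun t x => (hasDerivAt_comp_smul (hw.differentiable one_ne_zero) t x).const_mul (g x)) hzero

theorem hasDerivAt_integral_mul_comp_smul_of_hasCompactSupport_left (hg : Continuous g)
    (hgc : HasCompactSupport g) (hw : ContDiff ℝ 1 w) :
    HasDerivAt (fun t : ℝ => ∫ x, g x * w (t • x)) (∫ x, g x * ⟪∇ w x, x⟫) 1 :=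
  hasDerivAt_integral_mul_comp_smul hgc hg hw <| .of_forall fun t x hx => by
    rw [image_eq_zero_of_notMem_tsupport hx, zero_mul]

theorem hasDerivAt_integral_mul_comp_smul_of_hasCompactSupport_right (hg : Continuous g)
    (hη : ContDiff ℝ 1 η) (hηc : HasCompactSupport η) :
    HasDerivAt (fun t : ℝ => ∫ x, g x * η (t • x)) (∫ x, g x * ⟪∇ η x, x⟫) 1 := by
  obtain ⟨r, hr⟩ := hηc.isBounded.subset_closedBall (0 : E)
  refine hasDerivAt_integral_mul_comp_smul (isCompact_closedBall 0 (2 * r)) hg hη ?_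
  filter_upwards [lt_mem_nhds (by norm_num : (1 / 2 : ℝ) < 1)] with t ht x hx
  rw [mem_closedBall_zero_iff, not_le] at hx
  have hnotMem : t • x ∉ tsupport η := fun hmem => by
    have hle := mem_closedBall_zero_iff.1 (hr hmem)
    rw [norm_smul, Real.norm_of_nonneg (by linarith)] at hle
    nlinarith [norm_nonneg x]
  rw [image_eq_zero_of_notMem_tsupport hnotMem, mul_zero]

theorem integral_mul_comp_smul (η g : E → ℝ) {s : ℝ} (hs : 0 < s) :
    ∫ x, η x * g (s • x) = (s ^ Module.finrank ℝ E)⁻¹ * ∫ x, g x * η (s⁻¹ • x) := by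
  have hscale := Measure.integral_comp_smul volume (fun y => g y * η (s⁻¹ • y)) s
  rw [abs_of_pos (by positivity), smul_eq_mul] at hscale
  rw [← hscale]
  simp only [inv_smul_smul₀ hs.ne', mul_comm]

theorem hasDerivAt_integral_mul_comp_smul_one (hη : ContDiff ℝ 1 η) (hηc : HasCompactSupport η)
    (hg : Continuous g) :
    HasDerivAt (fun s : ℝ => ∫ x, η x * g (s • x))
      (-(Module.finrank ℝ E * ∫ x, g x * η x) - ∫ x, g x * ⟪∇ η x, x⟫) 1 := by
  have hη' := hasDerivAt_integral_mul_comp_smul_of_hasCompactSupport_right hg hη hηc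
  rw [← inv_one] at hη'
  have hprod := ((hasDerivAt_pow (Module.finrank ℝ E) (1 : ℝ)).fun_inv (by simp)).fun_mul
    (hη'.comp 1 (hasDerivAt_inv one_ne_zero))
  refine (hprod.congr_of_eventuallyEq ?_).congr_deriv ?_
  · filter_upwards [lt_mem_nhds zero_lt_one] with s hs
    exact integral_mul_comp_smul η g hs
  · simp only [Function.comp_apply, inv_one, one_smul, one_pow]
    ring

/-- Both sides are the derivative of `s ↦ ∫ η(x) w(s x)` at `s = 1`: under the integral sign, and
after the change of variables `x ↦ x / s`. -/
theorem integral_mul_inner_gradient_self (hη : ContDiff ℝ 1 η) (hηc : HasCompactSupport η)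
    (hw : ContDiff ℝ 1 w) :
    ∫ x, η x * ⟪∇ w x, x⟫ =
      -(Module.finrank ℝ E * ∫ x, w x * η x) - ∫ x, w x * ⟪∇ η x, x⟫ :=
  (hasDerivAt_integral_mul_comp_smul_of_hasCompactSupport_left hη.continuous hηc hw).unique
    (hasDerivAt_integral_mul_comp_smul_one hη hηc hw.continuous)

end Dilation

section LocalizedEnergy

variable {E : Type*} [NormedAddCommGroup E] [InnerProductSpace ℝ E] [FiniteDimensional ℝ E]
  {p : ℝ} {f u v η : E → ℝ}

/-- The divergence of `η ‖∇ u‖ ^ (p - 2) ∇ u` when `-Δ_p u = f`, expanded by the product rule so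
that no second derivative of `u` appears. -/
noncomputable def weightedFluxDiv (p : ℝ) (f u η : E → ℝ) (x : E) : ℝ :=
  ⟪pFlux p (∇ u x), ∇ η x⟫ - f x * η x

theorem weightedFluxDiv_eq_zero_of_notMem_tsupport {x : E} (hx : x ∉ tsupport η) :
    weightedFluxDiv p f u η x = 0 := by
  rw [weightedFluxDiv, gradient_eq_zero_of_notMem_tsupport hx, inner_zero_right,
    image_eq_zero_of_notMem_tsupport hx, mul_zero, sub_zero]

theorem hasCompactSupport_weightedFluxDiv (hηc : HasCompactSupport η) :
    HasCompactSupport (weightedFluxDiv p f u η) :=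
  HasCompactSupport.intro hηc fun _ => weightedFluxDiv_eq_zero_of_notMem_tsupport

theorem continuous_weightedFluxDiv (hp : 1 < p) (hf : Continuous f) (hu : ContDiff ℝ 1 u)
    (hη : ContDiff ℝ 1 η) : Continuous (weightedFluxDiv p f u η) :=
  (((continuous_pFlux hp).comp (continuous_gradient hu)).inner (continuous_gradient hη)).sub
    (hf.mul hη.continuous)

theorem inner_pFlux_gradient_sub_le (hp : 1 < p) (hu : Differentiable ℝ u)
    (hv : Differentiable ℝ v) (hη : Differentiable ℝ η) {x : E} (hηx : 0 ≤ η x) :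
    ⟪pFlux p (∇ u x), ∇ (fun y => η y * (v y - u y)) x⟫ - f x * (η x * (v x - u x)) ≤
      (η x * ‖∇ v x‖ ^ p / p + weightedFluxDiv p f u η x * v x) -
        (η x * ‖∇ u x‖ ^ p / p + weightedFluxDiv p f u η x * u x) := by
  rw [gradient_mul (hη x) ((hv x).fun_sub (hu x)), gradient_sub (hv x) (hu x), inner_add_right,
    inner_smul_right, inner_smul_right, weightedFluxDiv]
  linear_combination η x * inner_pFlux_sub_le hp (∇ u x) (∇ v x)

variable [MeasurableSpace E] [BorelSpace E]

/-- The convex functional `v ↦ ∫ η ‖∇ v‖ ^ p / p + ∫ weightedFluxDiv p f u η * v`, minimized by `u`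
when `-Δ_p u = f`. -/
noncomputable def localizedEnergy (p : ℝ) (f u η v : E → ℝ) : ℝ :=
  ∫ x, (η x * ‖∇ v x‖ ^ p / p + weightedFluxDiv p f u η x * v x)

theorem integrable_mul_norm_gradient_rpow_div (hp : 0 ≤ p) (hv : ContDiff ℝ 1 v)
    (hη : Continuous η) (hηc : HasCompactSupport η) :
    Integrable fun x => η x * ‖∇ v x‖ ^ p / p :=
  ((hη.mul ((continuous_gradient hv).norm.rpow_const
    fun _ => Or.inr hp)).integrable_of_hasCompactSupport hηc.mul_right).div_const p

theorem integrable_weightedFluxDiv_mul (hp : 1 < p) (hf : Continuous f) (hu : ContDiff ℝ 1 u)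
    (hη : ContDiff ℝ 1 η) (hηc : HasCompactSupport η) (hv : Continuous v) :
    Integrable fun x => weightedFluxDiv p f u η x * v x :=
  ((continuous_weightedFluxDiv hp hf hu hη).mul hv).integrable_of_hasCompactSupport
    (hasCompactSupport_weightedFluxDiv hηc).mul_right

theorem IsWeakPLaplaceSolution.localizedEnergy_le (h : IsWeakPLaplaceSolution p f u) (hp : 1 < p)
    (hf : Continuous f) (hu : ContDiff ℝ 1 u) (hη : ContDiff ℝ 1 η) (hηc : HasCompactSupport η)
    (hη0 : ∀ x, 0 ≤ η x) (hv : ContDiff ℝ 1 v) :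
    localizedEnergy p f u η u ≤ localizedEnergy p f u η v := by
  have hφ : ContDiff ℝ 1 fun x => η x * (v x - u x) := hη.mul (hv.sub hu)
  have hφc : HasCompactSupport fun x => η x * (v x - u x) := hηc.mul_right
  have hdensity : ∀ {w : E → ℝ}, ContDiff ℝ 1 w →
      Integrable fun x => η x * ‖∇ w x‖ ^ p / p + weightedFluxDiv p f u η x * w x := fun hw =>
    (integrable_mul_norm_gradient_rpow_div (by linarith) hw hη.continuous hηc).add
      (integrable_weightedFluxDiv_mul hp hf hu hη hηc hw.continuous)
  have hflux : Integrable fun x => ⟪pFlux p (∇ u x), ∇ (fun y => η y * (v y - u y)) x⟫ :=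
    Continuous.integrable_of_hasCompactSupport
      (((continuous_pFlux hp).comp (continuous_gradient hu)).inner (continuous_gradient hφ))
      (HasCompactSupport.intro hφc fun x hx => by
        rw [gradient_eq_zero_of_notMem_tsupport hx, inner_zero_right])
  have hsource : Integrable fun x => f x * (η x * (v x - u x)) :=
    (hf.mul hφ.continuous).integrable_of_hasCompactSupport hφc.mul_left
  have htest := h.integral_inner_pFlux hp hu hf hφ hφc
  rw [← sub_nonneg, localizedEnergy, localizedEnergy, ← integral_sub (hdensity hv) (hdensity hu),
    ← sub_eq_zero.2 htest, ← integral_sub hflux hsource]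
  exact integral_mono (hflux.sub hsource) ((hdensity hv).sub (hdensity hu)) fun x =>
    inner_pFlux_gradient_sub_le hp (hu.differentiable one_ne_zero) (hv.differentiable one_ne_zero)
      (hη.differentiable one_ne_zero) (hη0 x)

theorem localizedEnergy_comp_smul (hp : 1 < p) (hf : Continuous f) (hu : ContDiff ℝ 1 u)
    (hη : ContDiff ℝ 1 η) (hηc : HasCompactSupport η) {s : ℝ} (hs : 0 ≤ s) :
    localizedEnergy p f u η (fun x => u (s • x)) =
      s ^ p * (∫ x, η x * ‖∇ u (s • x)‖ ^ p) / p +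
        ∫ x, weightedFluxDiv p f u η x * u (s • x) := by
  have hus : ContDiff ℝ 1 fun x => u (s • x) := hu.comp (contDiff_const_smul s)
  have hpow : ∀ x, η x * ‖∇ (fun y => u (s • y)) x‖ ^ p =
      s ^ p * (η x * ‖∇ u (s • x)‖ ^ p) := fun x => by
    rw [gradient_comp_smul, norm_smul, Real.norm_of_nonneg hs, Real.mul_rpow hs (norm_nonneg _)]
    ring
  rw [localizedEnergy, integral_add
    (integrable_mul_norm_gradient_rpow_div (by linarith) hus hη.continuous hηc)
    (integrable_weightedFluxDiv_mul hp hf hu hη hηc hus.continuous), integral_div]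
  simp only [hpow, integral_const_mul]

theorem hasDerivAt_localizedEnergy_comp_smul (hp : 1 < p) (hf : Continuous f)
    (hu : ContDiff ℝ 1 u) (hη : ContDiff ℝ 1 η) (hηc : HasCompactSupport η) :
    HasDerivAt (fun s : ℝ => localizedEnergy p f u η fun x => u (s • x))
      (((p - Module.finrank ℝ E) * (∫ x, ‖∇ u x‖ ^ p * η x) - ∫ x, ‖∇ u x‖ ^ p * ⟪∇ η x, x⟫) / p +
        ∫ x, weightedFluxDiv p f u η x * ⟪∇ u x, x⟫) 1 := by
  have hgrad : Continuous fun x => ‖∇ u x‖ ^ p :=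
    (continuous_gradient hu).norm.rpow_const fun _ => Or.inr (by linarith)
  have hscale := (((Real.hasDerivAt_rpow_const (p := p) (Or.inl one_ne_zero)).fun_mul
    (hasDerivAt_integral_mul_comp_smul_one hη hηc hgrad)).div_const p).fun_add
    (hasDerivAt_integral_mul_comp_smul_of_hasCompactSupport_left
      (continuous_weightedFluxDiv hp hf hu hη) (hasCompactSupport_weightedFluxDiv hηc) hu)
  refine (hscale.congr_of_eventuallyEq ?_).congr_deriv ?_
  · filter_upwards [lt_mem_nhds zero_lt_one] with s hs
    exact localizedEnergy_comp_smul hp hf hu hη hηc hs.le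
  · simp only [Real.one_rpow, one_smul, mul_comm (η _)]
    ring

theorem IsWeakPLaplaceSolution.local_pohozaev (h : IsWeakPLaplaceSolution p f u) (hp : 1 < p)
    (hf : Continuous f) (hu : ContDiff ℝ 1 u) (hη : ContDiff ℝ 1 η) (hηc : HasCompactSupport η)
    (hη0 : ∀ x, 0 ≤ η x) :
    ((p - Module.finrank ℝ E) * (∫ x, ‖∇ u x‖ ^ p * η x) - ∫ x, ‖∇ u x‖ ^ p * ⟪∇ η x, x⟫) / p +
      ∫ x, weightedFluxDiv p f u η x * ⟪∇ u x, x⟫ = 0 := by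
  have hmin : IsLocalMin (fun s : ℝ => localizedEnergy p f u η fun x => u (s • x)) 1 :=
    .of_forall fun s => by
      have hus : ContDiff ℝ 1 fun x => u (s • x) := hu.comp (contDiff_const_smul s)
      simpa only [one_smul] using h.localizedEnergy_le hp hf hu hη hηc hη0 hus
  exact hmin.hasDerivAt_eq_zero (hasDerivAt_localizedEnergy_comp_smul hp hf hu hη hηc)

end LocalizedEnergy

section GlobalIdentities

variable {E : Type*} [NormedAddCommGroup E] [InnerProductSpace ℝ E] {p q l lam : ℝ} {u η : E → ℝ}

theorem contDiff_abs_rpow (hl : 1 < l) (hu : ContDiff ℝ 1 u) : ContDiff ℝ 1 fun x => |u x| ^ l :=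
  (contDiff_norm_rpow (E := ℝ) hl).comp hu

variable [FiniteDimensional ℝ E]

theorem gradient_abs_rpow (hl : 1 < l) {x : E} (hu : DifferentiableAt ℝ u x) :
    ∇ (fun y => |u y| ^ l) x = (l * |u x| ^ (l - 2) * u x) • ∇ u x :=
  gradient_scalar_comp (hasDerivAt_abs_rpow (u x) hl) hu

variable [MeasurableSpace E] [BorelSpace E]

theorem integral_abs_rpow_mul_inner_gradient_self (hlam : 0 < lam) (hu : ContDiff ℝ 1 u)
    (hη : ContDiff ℝ 1 η) (hηc : HasCompactSupport η) :
    (lam + 1) * ∫ x, |u x| ^ (lam - 1) * u x * η x * ⟪∇ u x, x⟫ =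
      -(Module.finrank ℝ E * ∫ x, |u x| ^ (lam + 1) * η x) -
        ∫ x, |u x| ^ (lam + 1) * ⟪∇ η x, x⟫ := by
  rw [← integral_mul_inner_gradient_self hη hηc (contDiff_abs_rpow (by linarith) hu),
    ← integral_const_mul]
  refine integral_congr_ae (.of_forall fun x => ?_)
  dsimp only
  rw [gradient_abs_rpow (by linarith) (hu.differentiable one_ne_zero x), real_inner_smul_left]
  ring_nf

theorem IsWeakPLaplaceSolution.local_pohozaev_power
    (h : IsWeakPLaplaceSolution p (fun x => |u x| ^ (lam - 1) * u x) u) (hp : 1 < p)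
    (hlam : 1 ≤ lam) (hu : ContDiff ℝ 1 u) (hη : ContDiff ℝ 1 η) (hηc : HasCompactSupport η)
    (hη0 : ∀ x, 0 ≤ η x) :
    ((p - Module.finrank ℝ E) * (∫ x, ‖∇ u x‖ ^ p * η x) - ∫ x, ‖∇ u x‖ ^ p * ⟪∇ η x, x⟫) / p +
      (∫ x, ⟪pFlux p (∇ u x), ∇ η x⟫ * ⟪∇ u x, x⟫) +
      (Module.finrank ℝ E * (∫ x, |u x| ^ (lam + 1) * η x) +
        ∫ x, |u x| ^ (lam + 1) * ⟪∇ η x, x⟫) / (lam + 1) = 0 := by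
  have hf : Continuous fun x => |u x| ^ (lam - 1) * u x :=
    continuous_abs_rpow_mul hlam hu.continuous
  have hradial : Continuous fun x => ⟪∇ u x, x⟫ := (continuous_gradient hu).inner continuous_id
  have hflux : Integrable fun x => ⟪pFlux p (∇ u x), ∇ η x⟫ * ⟪∇ u x, x⟫ :=
    Continuous.integrable_of_hasCompactSupport
      ((((continuous_pFlux hp).comp (continuous_gradient hu)).inner
        (continuous_gradient hη)).mul hradial)
      (HasCompactSupport.intro hηc fun x hx => by
        rw [gradient_eq_zero_of_notMem_tsupport hx, inner_zero_right, zero_mul])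
  have hsource : Integrable fun x => |u x| ^ (lam - 1) * u x * η x * ⟪∇ u x, x⟫ :=
    ((hf.mul hη.continuous).mul hradial).integrable_of_hasCompactSupport
      hηc.mul_left.mul_right
  have hpohozaev := h.local_pohozaev hp hf hu hη hηc hη0
  have hpower := integral_abs_rpow_mul_inner_gradient_self (by linarith) hu hη hηc (lam := lam)
  simp only [weightedFluxDiv, sub_mul] at hpohozaev
  rw [integral_sub hflux hsource] at hpohozaev
  have hlam' : lam + 1 ≠ 0 := by linarith
  rw [← hpohozaev, ← eq_sub_iff_add_eq', div_eq_iff hlam']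
  linear_combination hpower

theorem tendsto_integral_mul_inner_gradient_cutoff_self {h : E → ℝ} (hh : Integrable h)
    (hcont : Continuous h) :
    Tendsto (fun R => ∫ x, h x * ⟪∇ (cutoff R) x, x⟫) atTop (𝓝 0) := by
  obtain ⟨M, hM⟩ := exists_norm_mul_norm_gradient_cutoff_le E
  refine tendsto_integral_zero_of_eq_zero_of_norm_le (hh.norm.mul_const M)
    (fun R => hcont.mul ((continuous_gradient (contDiff_cutoff R)).inner continuous_id))
    (fun R hR x => ?_) fun R hR x hx => ?_
  · rw [abs_mul, Real.norm_eq_abs]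
    gcongr
    calc |⟪∇ (cutoff R) x, x⟫| ≤ ‖∇ (cutoff R) x‖ * ‖x‖ := abs_real_inner_le_norm _ _
      _ = ‖x‖ * ‖∇ (cutoff R) x‖ := mul_comm _ _
      _ ≤ M := hM R hR x
  · rw [gradient_cutoff_eq_zero_of_norm_le hR hx, inner_zero_left, mul_zero]

theorem tendsto_integral_inner_pFlux_gradient_cutoff_mul (hp : 1 < p) (hu : ContDiff ℝ 1 u)
    (hint : Integrable fun x => ‖∇ u x‖ ^ p) :
    Tendsto (fun R => ∫ x, ⟪pFlux p (∇ u x), ∇ (cutoff R) x⟫ * ⟪∇ u x, x⟫) atTop (𝓝 0) := by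
  obtain ⟨M, hM⟩ := exists_norm_mul_norm_gradient_cutoff_le E
  have hcu := continuous_gradient hu
  refine tendsto_integral_zero_of_eq_zero_of_norm_le (hint.mul_const M)
    (fun R => (((continuous_pFlux hp).comp hcu).inner
      (continuous_gradient (contDiff_cutoff R))).mul (hcu.inner continuous_id))
    (fun R hR x => ?_) fun R hR x hx => ?_
  · have hpow : ‖∇ u x‖ ^ (p - 1) * ‖∇ u x‖ = ‖∇ u x‖ ^ p := by
      rw [← Real.rpow_add_one' (norm_nonneg _) (by linarith), sub_add_cancel]
    calc |⟪pFlux p (∇ u x), ∇ (cutoff R) x⟫ * ⟪∇ u x, x⟫|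
        ≤ (‖∇ u x‖ ^ (p - 1) * ‖∇ (cutoff R) x‖) * (‖∇ u x‖ * ‖x‖) := by
          rw [abs_mul]
          gcongr
          exacts [abs_inner_pFlux_le hp _ _, abs_real_inner_le_norm _ _]
      _ = ‖∇ u x‖ ^ p * (‖x‖ * ‖∇ (cutoff R) x‖) := by rw [← hpow]; ring
      _ ≤ ‖∇ u x‖ ^ p * M := by gcongr; exact hM R hR x
  · rw [gradient_cutoff_eq_zero_of_norm_le hR hx, inner_zero_right, zero_mul]

theorem IsWeakPLaplaceSolution.pohozaev
    (h : IsWeakPLaplaceSolution p (fun x => |u x| ^ (lam - 1) * u x) u) (hp : 1 < p)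
    (hlam : 1 ≤ lam) (hu : ContDiff ℝ 1 u) (hgrad : Integrable fun x => ‖∇ u x‖ ^ p)
    (hpot : Integrable fun x => |u x| ^ (lam + 1)) :
    (p - Module.finrank ℝ E) * (∫ x, ‖∇ u x‖ ^ p) / p +
      Module.finrank ℝ E * (∫ x, |u x| ^ (lam + 1)) / (lam + 1) = 0 := by
  have hcgrad : Continuous fun x => ‖∇ u x‖ ^ p :=
    (continuous_gradient hu).norm.rpow_const fun _ => Or.inr (by linarith)
  have hcpot : Continuous fun x => |u x| ^ (lam + 1) :=
    hu.continuous.abs.rpow_const fun _ => Or.inr (by linarith)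
  have hlim := ((((tendsto_integral_mul_cutoff hgrad).const_mul (p - Module.finrank ℝ E)).sub
    (tendsto_integral_mul_inner_gradient_cutoff_self hgrad hcgrad)).div_const p).add
    (tendsto_integral_inner_pFlux_gradient_cutoff_mul hp hu hgrad) |>.add
    ((((tendsto_integral_mul_cutoff hpot).const_mul (Module.finrank ℝ E : ℝ)).add
      (tendsto_integral_mul_inner_gradient_cutoff_self hpot hcpot)).div_const (lam + 1))
  rw [sub_zero, add_zero, add_zero] at hlim
  refine tendsto_nhds_unique_of_eventuallyEq hlim tendsto_const_nhds ?_
  filter_upwards [eventually_gt_atTop 0] with R hR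
  exact h.local_pohozaev_power hp hlam hu (contDiff_cutoff R) (hasCompactSupport_cutoff hR)
    (cutoff_nonneg R)

theorem exists_abs_integral_mul_inner_pFlux_gradient_cutoff_le {ε : ℝ}
    (hlqp : l.HolderTriple q p) (hp : 1 < p) (hε : 0 < ε)
    (hW : Integrable (energyDensity p l u)) :
    ∃ C, ∀ R > 0, |∫ x, u x * ⟪pFlux p (∇ u x), ∇ (cutoff R) x⟫| ≤
      ε * (∫ x, energyDensity p l u x) + C * ∫ x : E, ‖∇ (cutoff R) x‖ ^ q := by
  obtain ⟨C, hyoung⟩ := exists_rpow_mul_cutoff_le hlqp one_pos hp.le zero_le_one hε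
  refine ⟨C, fun R hR => ?_⟩
  have hgrad : Integrable fun x : E => ‖∇ (cutoff R) x‖ ^ q :=
    integrable_norm_gradient_rpow (contDiff_cutoff R) (hasCompactSupport_cutoff hR)
      hlqp.right_pos
  rw [← integral_const_mul, ← integral_const_mul,
    ← integral_add (hW.const_mul ε) (hgrad.const_mul C)]
  refine abs_integral_le_integral_abs.trans <| integral_mono_of_nonneg
    (.of_forall fun _ => abs_nonneg _) ((hW.const_mul ε).add (hgrad.const_mul C))
    (.of_forall fun x => ?_)
  have hx := hyoung _ _ _ 1 (norm_nonneg (∇ u x)) (abs_nonneg (u x))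
    (norm_nonneg (∇ (cutoff R) x)) zero_le_one
  simp only [Real.one_rpow, Real.rpow_one, mul_one, one_mul] at hx
  calc |u x * ⟪pFlux p (∇ u x), ∇ (cutoff R) x⟫|
      ≤ |u x| * (‖∇ u x‖ ^ (p - 1) * ‖∇ (cutoff R) x‖) := by
        rw [abs_mul]
        gcongr
        exact abs_inner_pFlux_le hp _ _
    _ = ‖∇ u x‖ ^ (p - 1) * |u x| * ‖∇ (cutoff R) x‖ := by ring
    _ ≤ _ := hx

theorem IsWeakPLaplaceSolution.integral_norm_gradient_rpow_eq
    (h : IsWeakPLaplaceSolution p (fun x => |u x| ^ (lam - 1) * u x) u) (hp : 1 < p)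
    (hlam : 1 ≤ lam) (hlqp : (lam + 1).HolderTriple q p) (hq : Module.finrank ℝ E < q)
    (hu : ContDiff ℝ 1 u) (hW : Integrable (energyDensity p (lam + 1) u)) :
    ∫ x, ‖∇ u x‖ ^ p = ∫ x, |u x| ^ (lam + 1) := by
  have hgrad := integrable_norm_gradient_rpow_of_energyDensity (by linarith) hW hu
  have hpot := integrable_abs_rpow_of_energyDensity (by linarith) hW hu.continuous
  have hlim := ((tendsto_integral_mul_cutoff hgrad).sub (tendsto_integral_mul_cutoff hpot)).abs
  have hle : ∀ ε > 0, |(∫ x, ‖∇ u x‖ ^ p) - ∫ x, |u x| ^ (lam + 1)| ≤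
      ε * ∫ x, energyDensity p (lam + 1) u x := fun ε hε => by
    obtain ⟨C, hC⟩ := exists_abs_integral_mul_inner_pFlux_gradient_cutoff_le hlqp hp hε hW
    have hbound := ((tendsto_integral_norm_gradient_cutoff_rpow hq).const_mul C).const_add
      (ε * ∫ x, energyDensity p (lam + 1) u x)
    rw [mul_zero, add_zero] at hbound
    refine le_of_tendsto_of_tendsto hlim hbound ?_
    filter_upwards [eventually_gt_atTop 0] with R hR
    rw [← h.integral_norm_gradient_rpow_mul_add hp hlam hu (contDiff_cutoff R)
      (hasCompactSupport_cutoff hR), sub_add_cancel_left, abs_neg]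
    exact hC R hR
  have hzero : Tendsto (fun ε => ε * ∫ x, energyDensity p (lam + 1) u x) (𝓝[>] 0) (𝓝 0) :=
    ((continuous_mul_const _).tendsto' 0 0 (zero_mul _)).mono_left nhdsWithin_le_nhds
  exact sub_eq_zero.1 <| abs_nonpos_iff.1 <|
    ge_of_tendsto hzero (eventually_mem_nhdsWithin.mono hle)

end GlobalIdentities

section Liouville

variable {p q l lam n : ℝ}

theorem exists_holderTriple_of_lt (hp : 0 < p) (hpl : p < l) : ∃ q, l.HolderTriple q p :=
  ⟨(p⁻¹ - l⁻¹)⁻¹, by rw [inv_inv, add_sub_cancel], hp.trans hpl,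
    inv_pos.2 (sub_pos.2 (inv_strictAnti₀ hp hpl))⟩

theorem mul_sub_lt_mul_of_subcritical (hn : 0 ≤ n) (hp : 0 < p) (hlam : 0 < lam + 1)
    (hsub : p < n → lam < (n * (p - 1) + p) / (n - p)) : (lam + 1) * (n - p) < n * p := by
  rcases lt_or_ge p n with hpn | hnp
  · have := (lt_div_iff₀ (sub_pos.2 hpn)).1 (hsub hpn)
    linear_combination this
  · rcases hn.eq_or_lt with rfl | hn
    · linear_combination mul_pos hlam hp
    · exact (mul_nonpos_of_nonneg_of_nonpos hlam.le (sub_nonpos.2 hnp)).trans_lt (mul_pos hn hp)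

theorem lt_of_mul_sub_lt_mul (hlqp : l.HolderTriple q p) (h : l * (n - p) < n * p) : n < q := by
  have hq : q * (l - p) = l * p := by
    have hinv := hlqp.inv_add_inv_eq_inv
    have := hlqp.left_pos.ne'
    have := hlqp.right_pos.ne'
    have := hlqp.pos'.ne'
    field_simp at hinv
    linear_combination -hinv
  refine lt_of_mul_lt_mul_right ?_ (sub_pos.2 hlqp.lt).le
  linear_combination h - hq

variable {E : Type*} [NormedAddCommGroup E] [InnerProductSpace ℝ E] [FiniteDimensional ℝ E]
  [MeasurableSpace E] [BorelSpace E] {u : E → ℝ}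

theorem eq_zero_of_integral_abs_rpow_eq_zero (hl : 0 < l) (hu : Continuous u)
    (hint : Integrable fun x => |u x| ^ l) (hzero : ∫ x, |u x| ^ l = 0) (x : E) : u x = 0 := by
  have hae := (integral_eq_zero_iff_of_nonneg (fun x => by positivity) hint).1 hzero
  have heq := (hu.abs.rpow_const fun _ => Or.inr hl.le).ae_eq_iff_eq volume continuous_zero |>.1 hae
  exact abs_eq_zero.1 ((Real.rpow_eq_zero (abs_nonneg _) hl.ne').1 (congrFun heq x))

theorem IsWeakPLaplaceSolution.eq_zero_of_integrable_energyDensity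
    (h : IsWeakPLaplaceSolution p (fun x => |u x| ^ (lam - 1) * u x) u) (hp : 1 < p)
    (hlam : 1 ≤ lam) (hlqp : (lam + 1).HolderTriple q p) (hq : Module.finrank ℝ E < q)
    (hu : ContDiff ℝ 1 u) (hW : Integrable (energyDensity p (lam + 1) u)) (x : E) : u x = 0 := by
  have hpot := integrable_abs_rpow_of_energyDensity (by linarith) hW hu.continuous
  have hpohozaev := h.pohozaev hp hlam hu
    (integrable_norm_gradient_rpow_of_energyDensity (by linarith) hW hu) hpot
  rw [h.integral_norm_gradient_rpow_eq hp hlam hlqp hq hu hW] at hpohozaev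
  have hfactor : (1 - Module.finrank ℝ E / q) * ∫ x, |u x| ^ (lam + 1) = 0 := by
    rw [← hpohozaev, div_eq_mul_inv _ q, eq_sub_of_add_eq' hlqp.inv_add_inv_eq_inv]
    have := hlqp.pos'.ne'
    have := hlqp.left_pos.ne'
    field_simp
    ring
  have hlt : Module.finrank ℝ E / q < 1 := (div_lt_one hlqp.right_pos).2 hq
  exact eq_zero_of_integral_abs_rpow_eq_zero (by linarith) hu.continuous hpot
    ((mul_eq_zero.1 hfactor).resolve_left (sub_pos.2 hlt).ne') x

theorem liouville_stable_outside_compact_general (hp : 2 ≤ p) (hlam : p - 1 < lam)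
    (hsub : p < Module.finrank ℝ E →
      lam < (Module.finrank ℝ E * (p - 1) + p) / (Module.finrank ℝ E - p))
    (hu : ContDiff ℝ 1 u)
    (hweak : IsWeakPLaplaceSolution p (fun x => |u x| ^ (lam - 1) * u x) u)
    {K : Set E} (hK : IsCompact K) (hstable : IsStableOutside p lam u K) (x : E) : u x = 0 := by
  obtain ⟨q, hlqp⟩ := exists_holderTriple_of_lt (by linarith) (by linarith : p < lam + 1)
  have hq : Module.finrank ℝ E < q := lt_of_mul_sub_lt_mul hlqp <|
    mul_sub_lt_mul_of_subcritical (Nat.cast_nonneg _) (by linarith) (by linarith) hsub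
  have hW := hstable.integrable_energyDensity hweak hK hp hlam hlqp hq hu
  exact hweak.eq_zero_of_integrable_energyDensity (by linarith) (by linarith) hlqp hq hu hW x

end Liouville

end

/-- **Lemma 3.3, Liouville theorem for solutions stable outside a compact set.**
Let `p > 2`, with `p - 1 < λ`, and `λ < (N(p-1)+p)/(N-p)` in case `N > p`. If
`u ∈ C¹(ℝ^N)` is a weak solution of `-Δ_p u = |u|^{λ-1} u` on all of `ℝ^N` which is
stable outside a compact set `K ⊂ ℝ^N`, then `u ≡ 0`. -/
theorem liouville_stable_outside_compact
    (N : ℕ) (p lam : ℝ) (hp : 2 < p)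
    (hlam₁ : p - 1 < lam)
    (hlam₂ : (N : ℝ) > p → lam < ((N : ℝ) * (p - 1) + p) / ((N : ℝ) - p))
    (u : EuclideanSpace ℝ (Fin N) → ℝ) (hu : ContDiff ℝ 1 u)
    -- `u` is a weak solution of `-Δ_p u = |u|^{λ-1} u` on `ℝ^N`
    (hweak : ∀ φ : EuclideanSpace ℝ (Fin N) → ℝ,
      ContDiff ℝ (⊤ : ℕ∞) φ → HasCompactSupport φ →
      ∫ x, ‖gradient u x‖ ^ (p - 2) * ⟪gradient u x, gradient φ x⟫ =
        ∫ x, |u x| ^ (lam - 1) * u x * φ x)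
    -- `u` is stable outside a compact set `K`
    (K : Set (EuclideanSpace ℝ (Fin N))) (hK : IsCompact K)
    (hstable : ∀ φ : EuclideanSpace ℝ (Fin N) → ℝ,
      ContDiff ℝ 1 φ → HasCompactSupport φ → tsupport φ ⊆ Kᶜ →
      0 ≤ ∫ x,
        (‖gradient u x‖ ^ (p - 2) * ‖gradient φ x‖ ^ 2 +
          ((p - 2) * ‖gradient u x‖ ^ (p - 4) * ⟪gradient u x, gradient φ x⟫ ^ 2 -
            lam * |u x| ^ (lam - 1) * φ x ^ 2))) :
    ∀ x, u x = 0 :=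
  liouville_stable_outside_compact_general hp.le hlam₁
    (by simpa only [finrank_euclideanSpace_fin] using hlam₂) hu hweak hK hstable
end

section
/- Let (X, d) be a compact metric space and let D ⊆ Σ ⊆ X, where D is non-empty and Σ is closed. Set Γ := Σ \ D. Let M : D → (0, ∞) be bounded on compact subsets of D, and fix a real number k > 0. If y ∈ D satisfies M(y) · dist(y, Γ) > 2k, then there exists x ∈ D such that M(x) · dist(x, Γ) > 2k, M(x) ≥ M(y), and M(z) ≤ 2 M(x) for all z ∈ D ∩ closedBall(x, k / M(x)). -/
open Metric

/-!
If the doubling bound fails at every admissible point, then starting from `y` one can jump forever: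
each jump from `x` has length at most `k / M x` and more than doubles `M`. Hence the jump lengths
decay geometrically, with sum at most `2k / M y < dist (y, Γ)`. The points therefore converge in
`Σ`, and their limit is too close to `y` to lie in `Γ`, so it lies in `D`. Together with this limit
they form a compact subset of `D` on which `M` is unbounded.
-/

open Filter Set Topology

/-- The point `z` witnesses that the bound `M ≤ 2 * M x` fails on `closedBall x (k / M x)`. In the
proof by contradiction, such a `z` is the point to which one jumps from `x`. -/
def ViolatesDoubling {X : Type*} [PseudoMetricSpace X] (M : X → ℝ) (k : ℝ) (x z : X) : Prop :=
  dist x z ≤ k / M x ∧ 2 * M x < M z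

theorem lt_infEDist_of_add_lt_of_edist_le {X : Type*} [PseudoEMetricSpace X] {Γ : Set X} {x z : X}
    {a b : ENNReal} (h : a + b < infEDist x Γ) (hxz : edist x z ≤ b) : a < infEDist z Γ := by
  refine lt_of_add_lt_add_right (a := b) ?_
  calc
    a + b < infEDist x Γ := h
    _ ≤ infEDist z Γ + edist x z := infEDist_le_infEDist_add_edist
    _ ≤ infEDist z Γ + b := by gcongr

theorem exists_seq_of_forall_exists_rel {α : Type*} {P : α → Prop} {r : α → α → Prop}
    (h : ∀ x, P x → ∃ z, P z ∧ r x z) {y : α} (hy : P y) :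
    ∃ u : ℕ → α, u 0 = y ∧ (∀ n, P (u n)) ∧ ∀ n, r (u n) (u (n + 1)) := by
  choose! f hfP hf using h
  have hP : ∀ n, P (f^[n] y) := fun n => MapsTo.iterate (s := {x | P x}) hfP n hy
  refine ⟨fun n => f^[n] y, rfl, hP, fun n => ?_⟩
  simpa only [Function.iterate_succ_apply'] using hf _ (hP n)

theorem bddAbove_range_comp_of_tendsto {X : Type*} [TopologicalSpace X] {α : Type*} [Preorder α]
    {D : Set X} {f : X → α} (hf : ∀ K ⊆ D, IsCompact K → BddAbove (f '' K)) {u : ℕ → X} {a : X}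
    (hu : ∀ n, u n ∈ D) (ha : a ∈ D) (hua : Tendsto u atTop (𝓝 a)) : BddAbove (range (f ∘ u)) := by
  rw [range_comp]
  have hK : insert a (range u) ⊆ D := insert_subset ha (range_subset_iff.2 hu)
  exact (hf _ hK hua.isCompact_insert_range).mono (image_mono (subset_insert a _))

section PseudoMetricSpace

variable {X : Type*} [PseudoMetricSpace X] {M : X → ℝ} {k : ℝ}

namespace ViolatesDoubling

theorem nonneg {x z : X} (h : ViolatesDoubling M k x z) (hx : 0 < M x) : 0 ≤ k := by
  simpa only [zero_mul] using (le_div_iff₀ hx).1 (dist_nonneg.trans h.1)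

theorem lt_infEDist {Γ : Set X} {x z : X} (h : ViolatesDoubling M k x z) (hx : 0 < M x)
    (hxΓ : ENNReal.ofReal (2 * k / M x) < infEDist x Γ) :
    ENNReal.ofReal (2 * k / M z) < infEDist z Γ := by
  have hk : 0 ≤ k := h.nonneg hx
  have hz : 0 < M z := by linarith [h.2]
  have half : 2 * k / M z ≤ k / M x := by
    calc
      2 * k / M z ≤ 2 * k / (2 * M x) := by gcongr; exact h.2.le
      _ = k / M x := mul_div_mul_left k (M x) two_ne_zero
  have sum_le : 2 * k / M z + k / M x ≤ 2 * k / M x := by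
    calc
      2 * k / M z + k / M x ≤ k / M x + k / M x := by gcongr
      _ = 2 * k / M x := by ring
  refine lt_infEDist_of_add_lt_of_edist_le (x := x) (b := ENNReal.ofReal (k / M x)) ?_ ?_
  · rw [← ENNReal.ofReal_add (by positivity) (by positivity)]
    exact (ENNReal.ofReal_le_ofReal sum_le).trans_lt hxΓ
  · rw [edist_dist]
    exact ENNReal.ofReal_le_ofReal h.1

variable {u : ℕ → X}

theorem tendsto_atTop (hu : ∀ n, ViolatesDoubling M k (u n) (u (n + 1))) (h₀ : 0 < M (u 0)) :
    Tendsto (M ∘ u) atTop atTop :=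
  tendsto_atTop_of_geom_le h₀ one_lt_two fun n => (hu n).2.le

theorem dist_succ_le_geometric (hu : ∀ n, ViolatesDoubling M k (u n) (u (n + 1)))
    (h₀ : 0 < M (u 0)) (n : ℕ) : dist (u n) (u (n + 1)) ≤ 2 * k / M (u 0) / 2 / 2 ^ n := by
  have hk : 0 ≤ k := (hu 0).nonneg h₀
  have growth : 2 ^ n * M (u 0) ≤ M (u n) :=
    geom_le (u := M ∘ u) zero_le_two n fun m _ => (hu m).2.le
  calc
    dist (u n) (u (n + 1)) ≤ k / M (u n) := (hu n).1
    _ ≤ k / (2 ^ n * M (u 0)) := by gcongr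
    _ = 2 * k / M (u 0) / 2 / 2 ^ n := by field_simp

end ViolatesDoubling

theorem not_forall_violatesDoubling {D S : Set X} (hDS : D ⊆ S) (hS : IsComplete S)
    (hM : ∀ K ⊆ D, IsCompact K → BddAbove (M '' K)) {u : ℕ → X} (huD : ∀ n, u n ∈ D)
    (h₀ : 0 < M (u 0)) (hΓ : ENNReal.ofReal (2 * k / M (u 0)) < infEDist (u 0) (S \ D)) :
    ¬ ∀ n, ViolatesDoubling M k (u n) (u (n + 1)) := by
  intro hu
  have hdist := ViolatesDoubling.dist_succ_le_geometric hu h₀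
  obtain ⟨a, haS, hua⟩ := cauchySeq_tendsto_of_isComplete hS (fun n => hDS (huD n))
    (cauchySeq_of_le_geometric_two hdist)
  have edist_le : edist (u 0) a ≤ ENNReal.ofReal (2 * k / M (u 0)) := by
    rw [edist_dist]
    exact ENNReal.ofReal_le_ofReal (dist_le_of_le_geometric_two_of_tendsto₀ hdist hua)
  have haD : a ∈ D := by
    by_contra ha
    exact (hΓ.trans_le (infEDist_le_edist_of_mem ⟨haS, ha⟩)).not_ge edist_le
  exact not_bddAbove_of_tendsto_atTop (ViolatesDoubling.tendsto_atTop hu h₀)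
    (bddAbove_range_comp_of_tendsto hM huD haD hua)

theorem doubling_lemma_general {D S : Set X} (hDS : D ⊆ S) (hS : IsComplete S)
    (hM : ∀ K ⊆ D, IsCompact K → BddAbove (M '' K)) {y : X} (hy : y ∈ D) (hMy : 0 < M y)
    (hyΓ : ENNReal.ofReal (2 * k / M y) < infEDist y (S \ D)) :
    ∃ x ∈ D, ENNReal.ofReal (2 * k / M x) < infEDist x (S \ D) ∧ M y ≤ M x ∧
      ∀ z ∈ D ∩ closedBall x (k / M x), M z ≤ 2 * M x := by
  by_contra! hno
  have jump : ∀ x, (x ∈ D ∧ ENNReal.ofReal (2 * k / M x) < infEDist x (S \ D) ∧ M y ≤ M x) →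
      ∃ z, (z ∈ D ∧ ENNReal.ofReal (2 * k / M z) < infEDist z (S \ D) ∧ M y ≤ M z) ∧
        ViolatesDoubling M k x z := by
    rintro x ⟨hxD, hxΓ, hyx⟩
    obtain ⟨z, ⟨hzD, hzx⟩, hz⟩ := hno x hxD hxΓ hyx
    have hxz : ViolatesDoubling M k x z := ⟨mem_closedBall'.1 hzx, hz⟩
    exact ⟨z, ⟨hzD, hxz.lt_infEDist (hMy.trans_le hyx) hxΓ, by linarith⟩, hxz⟩
  obtain ⟨u, rfl, huP, hu⟩ := exists_seq_of_forall_exists_rel jump ⟨hy, hyΓ, le_rfl⟩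
  exact not_forall_violatesDoubling hDS hS hM (fun n => (huP n).1) hMy hyΓ hu

end PseudoMetricSpace

/-- **Lemma 3.4 (Doubling lemma).** Let `(X, d)` be a compact metric space and
`D ⊆ Σ ⊆ X` with `D` nonempty and `Σ` closed; set `Γ := Σ \ D`. Let `M : D → (0, ∞)`
be bounded on compact subsets of `D` and fix `k > 0`. If `y ∈ D` satisfies
`M(y) · dist(y, Γ) > 2k` (with `dist(y, Γ) = +∞` when `Γ = ∅`, which we encode via
the extended infimum distance: `infEdist y Γ > 2k / M(y)`), then there is `x ∈ D` with
`M(x) · dist(x, Γ) > 2k`, `M(x) ≥ M(y)`, and `M(z) ≤ 2 M(x)` for every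
`z ∈ D ∩ closedBall(x, k / M(x))`. -/
theorem doubling_lemma
    {X : Type*} [MetricSpace X] [CompactSpace X]
    (D S : Set X) (hDS : D ⊆ S) (hD : D.Nonempty) (hS : IsClosed S)
    (M : X → ℝ) (hMpos : ∀ x ∈ D, 0 < M x)
    (hMbdd : ∀ K : Set X, K ⊆ D → IsCompact K → ∃ B : ℝ, ∀ x ∈ K, M x ≤ B)
    (k : ℝ) (hk : 0 < k)
    (y : X) (hy : y ∈ D)
    (hyΓ : ENNReal.ofReal (2 * k / M y) < EMetric.infEdist y (S \ D)) :
    ∃ x ∈ D,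
      ENNReal.ofReal (2 * k / M x) < EMetric.infEdist x (S \ D) ∧
      M y ≤ M x ∧
      ∀ z ∈ D ∩ closedBall x (k / M x), M z ≤ 2 * M x :=
  doubling_lemma_general hDS hS.isComplete (fun K hKD hK => (hMbdd K hKD hK).imp fun _ =>
    forall_mem_image.2) hy (hMpos y hy) hyΓ
end
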